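/- Let Q be a Euclidean quiver. Suppose d_1 and d_2 are dimension vectors whose canonical decompositions only involve real Schur roots of non-regular indecomposables (strongly prehomogeneous). Then rep(Q)_{d_1} ∩ rep(Q)_{d_2} = rep(Q)_{d_3} for some prehomogeneous dimension vector d_3; i.e., the intersection of the two semi-stable subcategories is again semi-stable. -/

import Mathlib

open Matrix BigOperators

/-- A finite quiver: `n` vertices, `a` arrows with source and target maps. -/
structure FinQuiver where
  n : ℕ
  a : ℕ
  src : Fin a → Fin n
  tgt : Fin a → Fin n

namespace FinQuiver

/-- A finite quiver is acyclic iff it admits a topological ordering of vertices. -/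
def Acyclic (Q : FinQuiver) : Prop :=
  ∃ h : Fin Q.n → ℕ, ∀ x, h (Q.src x) < h (Q.tgt x)

/-- Connectivity of the underlying graph. -/
def Connected (Q : FinQuiver) : Prop :=
  ∀ S : Finset (Fin Q.n), S.Nonempty → S ≠ Finset.univ →
    ∃ x, (Q.src x ∈ S ∧ Q.tgt x ∉ S) ∨ (Q.tgt x ∈ S ∧ Q.src x ∉ S)

/-- The Euler form ⟨d,e⟩ = Σ_i d_i e_i − Σ_{α : i → j} d_i e_j. -/
def euler (Q : FinQuiver) (d e : Fin Q.n → ℤ) : ℤ :=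
  (∑ i, d i * e i) - ∑ x, d (Q.src x) * e (Q.tgt x)

/-- A (possibly disconnected) Dynkin quiver: acyclic with positive definite Tits form. -/
def IsDynkin (Q : FinQuiver) : Prop :=
  Q.Acyclic ∧ ∀ d : Fin Q.n → ℤ, d ≠ 0 → 0 < Q.euler d d

/-- `δ` is the null root: positive, isotropic, and every isotropic vector is an
integer multiple of `δ`. -/
def IsNullRoot (Q : FinQuiver) (δ : Fin Q.n → ℤ) : Prop :=
  (∀ i, 0 < δ i) ∧ Q.euler δ δ = 0 ∧
    ∀ d : Fin Q.n → ℤ, Q.euler d d = 0 → ∃ m : ℤ, d = m • δ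

/-- A Euclidean (affine) quiver: connected, acyclic, positive semidefinite Tits form
with a null root. -/
def IsEuclidean (Q : FinQuiver) : Prop :=
  Q.Acyclic ∧ Q.Connected ∧ (∀ d, 0 ≤ Q.euler d d) ∧ ∃ δ, Q.IsNullRoot δ

end FinQuiver

/-- A finite-dimensional representation of `Q` over `k`: dimensions at each vertex,
and a matrix for each arrow. -/
structure QRep (k : Type) [Field k] (Q : FinQuiver) where
  d : Fin Q.n → ℕ
  mat : ∀ x : Fin Q.a, Matrix (Fin (d (Q.tgt x))) (Fin (d (Q.src x))) k

namespace QRep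

variable {k : Type} [Field k] {Q : FinQuiver}

/-- The dimension vector of a representation, as an integer vector. -/
def dimVec (M : QRep k Q) : Fin Q.n → ℤ := fun i => (M.d i : ℤ)

/-- The space of morphisms of representations `M → N`. -/
def homSpace (M N : QRep k Q) :
    Submodule k (∀ i, Matrix (Fin (N.d i)) (Fin (M.d i)) k) where
  carrier := {f | ∀ x, f (Q.tgt x) * M.mat x = N.mat x * f (Q.src x)}
  add_mem' := by
    intro f g hf hg x
    simp only [Pi.add_apply, Matrix.add_mul, Matrix.mul_add, hf x, hg x]
  zero_mem' := by intro x; simp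
  smul_mem' := by
    intro c f hf x
    simp only [Pi.smul_apply, Matrix.smul_mul, Matrix.mul_smul, hf x]

/-- The standard map whose kernel is `Hom(M,N)` and cokernel is `Ext¹(M,N)`. -/
def extMap (M N : QRep k Q) :
    (∀ i, Matrix (Fin (N.d i)) (Fin (M.d i)) k) →ₗ[k]
    (∀ x : Fin Q.a, Matrix (Fin (N.d (Q.tgt x))) (Fin (M.d (Q.src x))) k) where
  toFun f := fun x => f (Q.tgt x) * M.mat x - N.mat x * f (Q.src x)
  map_add' := by
    intro f g; funext x
    simp only [Pi.add_apply, Matrix.add_mul, Matrix.mul_add]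
    abel
  map_smul' := by
    intro c f; funext x
    simp only [Pi.smul_apply, Matrix.smul_mul, Matrix.mul_smul, RingHom.id_apply,
      smul_sub]

/-- dim_k Hom(M,N). -/
noncomputable def homDim (M N : QRep k Q) : ℕ :=
  Module.finrank k (homSpace M N)

/-- dim_k Ext¹(M,N), defined as the dimension of the cokernel of `extMap`. -/
noncomputable def extDim (M N : QRep k Q) : ℕ :=
  Module.finrank k
    ((∀ x : Fin Q.a, Matrix (Fin (N.d (Q.tgt x))) (Fin (M.d (Q.src x))) k) ⧸
      LinearMap.range (extMap M N))

/-- Isomorphism of representations. -/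
def IsoRep (M N : QRep k Q) : Prop :=
  ∃ f ∈ homSpace M N, ∀ i, Function.Bijective (Matrix.mulVecLin (f i))

/-- `L` is (the source of a monomorphism into) a subrepresentation of `M`. -/
def IsSubrep (L M : QRep k Q) : Prop :=
  ∃ f ∈ homSpace L M, ∀ i, Function.Injective (Matrix.mulVecLin (f i))

/-- `L` is a direct summand of `M` (split monomorphism with retraction). -/
def IsSummand (L M : QRep k Q) : Prop :=
  ∃ f ∈ homSpace L M, ∃ g ∈ homSpace M L, ∀ i, g i * f i = 1

/-- `M` is indecomposable: nonzero, and its endomorphism ring has no nontrivial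
idempotents. -/
def Indec (M : QRep k Q) : Prop :=
  (∃ i, M.d i ≠ 0) ∧
    ∀ f ∈ homSpace M M, (∀ i, f i * f i = f i) → f = 0 ∨ f = 1

/-- An exceptional representation: indecomposable and rigid. -/
def Exceptional (M : QRep k Q) : Prop :=
  Indec M ∧ extDim M M = 0

/-- `(f, g)` form a short exact sequence `0 → A → B → C → 0` of representations. -/
def IsSES (A B C : QRep k Q)
    (f : ∀ i, Matrix (Fin (B.d i)) (Fin (A.d i)) k)
    (g : ∀ i, Matrix (Fin (C.d i)) (Fin (B.d i)) k) : Prop :=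
  f ∈ homSpace A B ∧ g ∈ homSpace B C ∧
    ∀ i, Function.Injective (Matrix.mulVecLin (f i)) ∧
      Function.Surjective (Matrix.mulVecLin (g i)) ∧
      LinearMap.range (Matrix.mulVecLin (f i)) = LinearMap.ker (Matrix.mulVecLin (g i))

/-- A thick (= abelian and extension-closed, since rep(Q) is hereditary) full
subcategory: closed under isomorphism, direct summands and two-out-of-three for
short exact sequences. -/
def Thick (P : QRep k Q → Prop) : Prop :=
  (∀ M N, IsoRep M N → P M → P N) ∧
  (∀ L M, IsSummand L M → P M → P L) ∧
  (∀ A B C f g, IsSES A B C f g →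
    ((P A → P B → P C) ∧ (P A → P C → P B) ∧ (P B → P C → P A)))

/-- `P` is the smallest thick subcategory containing `S`. -/
def GeneratedBy (P : QRep k Q → Prop) (S : Set (QRep k Q)) : Prop :=
  Thick P ∧ (∀ X ∈ S, P X) ∧
    ∀ P' : QRep k Q → Prop, Thick P' → (∀ X ∈ S, P' X) → ∀ M, P M → P' M

/-- An exceptional sequence. -/
def ExcSeq {r : ℕ} (E : Fin r → QRep k Q) : Prop :=
  (∀ i, Exceptional (E i) ∧ homDim (E i) (E i) = 1) ∧
    ∀ i j : Fin r, i < j → homDim (E i) (E j) = 0 ∧ extDim (E i) (E j) = 0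

/-- King's criterion for `⟨d,−⟩`-semi-stability. -/
def SemiStable (d : Fin Q.n → ℤ) (M : QRep k Q) : Prop :=
  Q.euler d M.dimVec = 0 ∧ ∀ L : QRep k Q, IsSubrep L M → Q.euler d L.dimVec ≤ 0

/-- `M` is regular: every indecomposable summand pairs to zero with the null root. -/
def RegularRep (δ : Fin Q.n → ℤ) (M : QRep k Q) : Prop :=
  ∀ L, IsSummand L M → Indec L → Q.euler δ L.dimVec = 0

/-- `M` is in the right perpendicular category of `V`. -/
def RPerp (V M : QRep k Q) : Prop := homDim V M = 0 ∧ extDim V M = 0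

/-- `M` is in the left perpendicular category of `V`. -/
def LPerp (V M : QRep k Q) : Prop := homDim M V = 0 ∧ extDim M V = 0

/-- `P` is a projective representation (Ext¹(P,−) = 0). -/
def IsProjRep (P : QRep k Q) : Prop := ∀ M : QRep k Q, extDim P M = 0

end QRep

/-- `α` is a Schur root: the dimension vector of an indecomposable representation
with trivial endomorphism ring. -/
def IsSchurRoot (k : Type) [Field k] (Q : FinQuiver) (α : Fin Q.n → ℤ) : Prop :=
  ∃ M : QRep k Q, M.dimVec = α ∧ QRep.Indec M ∧ QRep.homDim M M = 1

/-- `ext(α,β) = 0`: some representations of these dimension vectors have no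
extensions. -/
def ExtZero (k : Type) [Field k] (Q : FinQuiver) (α β : Fin Q.n → ℤ) : Prop :=
  ∃ M N : QRep k Q, M.dimVec = α ∧ N.dimVec = β ∧ QRep.extDim M N = 0

/-- Kac's characterization of the canonical decomposition: `c` is the canonical
decomposition of `d` iff the entries sum to `d`, are Schur roots, and are pairwise
ext-orthogonal. -/
def IsCanonDecomp (k : Type) [Field k] (Q : FinQuiver) (d : Fin Q.n → ℤ)
    (c : List (Fin Q.n → ℤ)) : Prop :=
  c.sum = d ∧ (∀ α ∈ c, IsSchurRoot k Q α) ∧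
    ∀ i j : Fin c.length, i ≠ j → ExtZero k Q (c.get i) (c.get j)

/-! For a rigid representation `V`, King's criterion says that `⟨dim V, -⟩`-semistability is
membership in the right perpendicular category `V^⊥`, which is wide. Let `P = V₁^⊥`, and let
`W = P ∩ V₂^⊥`. The functor `M ↦ ⨁ i, M i` is represented on each of these subcategories by a
generator, `B` on `P` and `B'` on `W`, once the representations generated by one vector at each
vertex have bounded dimension. They do, since such an `M` satisfies `⟨M, M⟩ ≤ dim End M ≤ dim M`,
a linear bound on a quadratic form which is positive definite on the orthogonal of a non-regular
summand of `V₁`. The kernel `K` and the cokernel `C` of the canonical morphism `B → B'` lie in `P`,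
and `W` is cut out of `P` by the conditions `K^⊥` and `C^⊥`. Bongartz completion finally replaces
`V₁`, `K` and `C` by a single rigid representation. -/

section PositiveDefinite

variable {V : Type*} [AddCommGroup V] [Module.Finite ℤ V] [Module.Free ℤ V]
  {B : LinearMap.BilinForm ℤ V}

theorem exists_apply_eq_smul_of_posDef (hpos : ∀ v ≠ 0, 0 < B v v) (ℓ : Module.Dual ℤ V) :
    ∃ (a : ℤ) (w : V), a ≠ 0 ∧ B w = a • ℓ := by
  have hinj : Function.Injective B := (injective_iff_map_eq_zero B).2 fun v hv => by
    by_contra hne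
    exact (hpos v hne).ne' (LinearMap.congr_fun hv v)
  have hrank : Module.finrank ℤ (LinearMap.range B) = Module.finrank ℤ (Module.Dual ℤ V) := by
    rw [LinearMap.finrank_range_of_inj hinj, Module.finrank_linearMap_self]
  have := (LinearMap.range B).finiteQuotientOfFreeOfRankEq hrank
  obtain ⟨w, hw⟩ : Nat.card (Module.Dual ℤ V ⧸ LinearMap.range B) • ℓ ∈ LinearMap.range B := by
    rw [← Submodule.Quotient.mk_eq_zero, Submodule.Quotient.mk_smul]
    exact card_nsmul_eq_zero'
  exact ⟨_, w, Nat.cast_ne_zero.2 Nat.card_pos.ne', by rw [hw, natCast_zsmul]⟩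

/-- If `B w = a • ℓ`, then `(a * ℓ v) ^ 2 ≤ B w w * B v v` by the Cauchy–Schwarz inequality. -/
theorem exists_le_of_posDef (hsymm : B.IsSymm) (hpos : ∀ v ≠ 0, 0 < B v v)
    (ℓ : Module.Dual ℤ V) (c : ℤ) : ∃ T : ℕ, ∀ v, B v v ≤ c * ℓ v → ℓ v ≤ T := by
  have hnonneg : ∀ v, 0 ≤ B v v := fun v => by
    obtain rfl | hv := eq_or_ne v 0
    · rw [map_zero]
    · exact (hpos v hv).le
  obtain ⟨a, w, ha, hw⟩ := exists_apply_eq_smul_of_posDef hpos ℓ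
  refine ⟨(c * B w w).toNat, fun v hv => ?_⟩
  obtain hv₀ | hv₀ := le_or_gt (ℓ v) 0
  · exact hv₀.trans (Int.natCast_nonneg _)
  refine le_trans (le_of_mul_le_mul_right ?_ hv₀) (Int.self_le_toNat _)
  calc ℓ v * ℓ v ≤ a ^ 2 * (ℓ v * ℓ v) :=
        le_mul_of_one_le_left (mul_self_nonneg _) (sq_pos_of_ne_zero ha)
    _ = (B w v) ^ 2 := by rw [hw, LinearMap.smul_apply, smul_eq_mul]; ring
    _ ≤ B w w * B v v := LinearMap.BilinForm.apply_sq_le_of_symm B hnonneg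
        (LinearMap.BilinForm.isSymm_iff.1 hsymm) w v
    _ ≤ B w w * (c * ℓ v) := mul_le_mul_of_nonneg_left hv (hnonneg w)
    _ = c * B w w * ℓ v := by ring

end PositiveDefinite

namespace FinQuiver

variable (Q : FinQuiver)

/-- The Euler form as a bilinear form. -/
def eulerForm : LinearMap.BilinForm ℤ (Fin Q.n → ℤ) :=
  LinearMap.mk₂ ℤ Q.euler
    (fun a b c => by simp only [euler, Pi.add_apply, add_mul, Finset.sum_add_distrib]; ring)
    (fun t a c => by
      simp only [euler, Pi.smul_apply, smul_eq_mul, mul_assoc, ← Finset.mul_sum, mul_sub])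
    (fun a b c => by simp only [euler, Pi.add_apply, mul_add, Finset.sum_add_distrib]; ring)
    (fun t a c => by
      simp only [euler, Pi.smul_apply, smul_eq_mul, mul_left_comm _ t, ← Finset.mul_sum, mul_sub])

variable {Q}

theorem exists_sum_le_of_posDef {y : Fin Q.n → ℤ}
    (hpos : ∀ v ≠ 0, Q.euler y v = 0 → 0 < Q.euler v v) :
    ∃ T : ℕ, ∀ v, Q.euler y v = 0 → Q.euler v v ≤ ∑ i, v i → ∑ i, v i ≤ T := by
  let U : Submodule ℤ (Fin Q.n → ℤ) := LinearMap.ker (Q.eulerForm y)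
  let B := (Q.eulerForm + Q.eulerForm.flip).restrict U
  have hBv : ∀ v : U, B v v = 2 * Q.euler v v := fun v => (two_mul _).symm
  have hsymm : B.IsSymm := ⟨fun v w => add_comm (Q.euler v w) (Q.euler w v)⟩
  obtain ⟨T, hT⟩ := exists_le_of_posDef hsymm
    (fun v hv => by
      rw [hBv]
      exact mul_pos two_pos (hpos v (fun h => hv (Subtype.ext h)) v.2))
    ((∑ i, LinearMap.proj i) ∘ₗ U.subtype) 2
  refine ⟨T, fun v hv hle => ?_⟩
  have hsum : ((∑ i, LinearMap.proj i) ∘ₗ U.subtype) ⟨v, hv⟩ = ∑ i, v i := by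
    simp only [LinearMap.comp_apply, LinearMap.sum_apply, LinearMap.proj_apply,
      Submodule.subtype_apply]
  rw [← hsum]
  refine hT ⟨v, hv⟩ ?_
  rw [hBv, hsum]
  exact mul_le_mul_of_nonneg_left hle zero_le_two

/-- The Tits form being semidefinite, an isotropic `δ` lies in its radical. -/
theorem IsNullRoot.euler_right_ne_zero {δ : Fin Q.n → ℤ} (hδ : Q.IsNullRoot δ)
    (hpsd : ∀ d, 0 ≤ Q.euler d d) {y : Fin Q.n → ℤ} (hy : Q.euler δ y ≠ 0) :
    Q.euler y δ ≠ 0 := by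
  let B := Q.eulerForm + Q.eulerForm.flip
  have hcs := LinearMap.BilinForm.apply_sq_le_of_symm B
    (fun v => add_nonneg (hpsd v) (hpsd v)) ⟨fun v w => add_comm _ _⟩ δ y
  have hδδ : B δ δ = 0 := by
    change Q.euler δ δ + Q.euler δ δ = 0
    rw [hδ.2.1, add_zero]
  rw [hδδ, zero_mul] at hcs
  have hrad : Q.euler δ y + Q.euler y δ = 0 := sq_nonpos_iff _ |>.1 hcs
  intro h
  rw [h, add_zero] at hrad
  exact hy hrad

theorem IsNullRoot.euler_self_pos {δ : Fin Q.n → ℤ} (hδ : Q.IsNullRoot δ)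
    (hpsd : ∀ d, 0 ≤ Q.euler d d) {y v : Fin Q.n → ℤ} (hy : Q.euler δ y ≠ 0)
    (hv : v ≠ 0) (hyv : Q.euler y v = 0) : 0 < Q.euler v v := by
  refine (hpsd v).lt_of_ne fun h => hv ?_
  obtain ⟨m, rfl⟩ := hδ.2.2 v h.symm
  have hm : m * Q.euler y δ = 0 := ((Q.eulerForm y).map_smul m δ).symm.trans hyv
  rw [(mul_eq_zero.1 hm).resolve_right (hδ.euler_right_ne_zero hpsd hy), zero_smul]

end FinQuiver

universe u v

section Ladder

variable {R A₀ A₁ B₀ B₁ C₀ C₁ : Type*} [CommRing R]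
  [AddCommGroup A₀] [AddCommGroup A₁] [AddCommGroup B₀] [AddCommGroup B₁]
  [AddCommGroup C₀] [AddCommGroup C₁]
  [Module R A₀] [Module R A₁] [Module R B₀] [Module R B₁] [Module R C₀] [Module R C₁]

/-- A short exact sequence of two-term complexes `α : A₀ → A₁`, `β : B₀ → B₁`, `γ : C₀ → C₁`; the
rows are `f₀, g₀` in degree zero and `f₁, g₁` in degree one. For the complexes computing
`Hom` and `Ext¹` it packages the six-term exact sequence. -/
structure IsLadder (α : A₀ →ₗ[R] A₁) (β : B₀ →ₗ[R] B₁) (γ : C₀ →ₗ[R] C₁)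
    (f₀ : A₀ →ₗ[R] B₀) (g₀ : B₀ →ₗ[R] C₀) (f₁ : A₁ →ₗ[R] B₁) (g₁ : B₁ →ₗ[R] C₁) : Prop where
  comm_left : f₁ ∘ₗ α = β ∘ₗ f₀
  comm_right : g₁ ∘ₗ β = γ ∘ₗ g₀
  injective₀ : Function.Injective f₀
  exact₀ : Function.Exact f₀ g₀
  surjective₀ : Function.Surjective g₀
  injective₁ : Function.Injective f₁
  exact₁ : Function.Exact f₁ g₁
  surjective₁ : Function.Surjective g₁

namespace IsLadder

variable {α : A₀ →ₗ[R] A₁} {β : B₀ →ₗ[R] B₁} {γ : C₀ →ₗ[R] C₁}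
  {f₀ : A₀ →ₗ[R] B₀} {g₀ : B₀ →ₗ[R] C₀} {f₁ : A₁ →ₗ[R] B₁} {g₁ : B₁ →ₗ[R] C₁}

theorem exists_ker_preimage (H : IsLadder α β γ f₀ g₀ f₁ g₁) {b : B₀} (hb : β b = 0)
    (hgb : g₀ b = 0) : ∃ a, α a = 0 ∧ f₀ a = b := by
  obtain ⟨a, rfl⟩ := (H.exact₀ b).1 hgb
  have hαa : f₁ (α a) = 0 := (LinearMap.congr_fun H.comm_left a).trans hb
  exact ⟨a, H.injective₁ (hαa.trans (map_zero f₁).symm), rfl⟩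

theorem injective_middle (H : IsLadder α β γ f₀ g₀ f₁ g₁) (hα : Function.Injective α)
    (hγ : Function.Injective γ) : Function.Injective β := by
  refine (injective_iff_map_eq_zero β).2 fun b hb => ?_
  have hγb : γ (g₀ b) = 0 := by
    rw [← LinearMap.comp_apply, ← H.comm_right, LinearMap.comp_apply, hb, map_zero]
  obtain ⟨a, ha, rfl⟩ := H.exists_ker_preimage hb (hγ (hγb.trans (map_zero γ).symm))
  rw [hα (ha.trans (map_zero α).symm), map_zero]

theorem surjective_middle (H : IsLadder α β γ f₀ g₀ f₁ g₁) (hα : Function.Surjective α)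
    (hγ : Function.Surjective γ) : Function.Surjective β := by
  intro b₁
  obtain ⟨c, hc⟩ := hγ (g₁ b₁)
  obtain ⟨b, rfl⟩ := H.surjective₀ c
  have hb : g₁ (b₁ - β b) = 0 := by
    rw [map_sub, ← hc, sub_eq_zero]
    exact (LinearMap.congr_fun H.comm_right b).symm
  obtain ⟨a₁, ha₁⟩ := (H.exact₁ _).1 hb
  obtain ⟨a, rfl⟩ := hα a₁
  refine ⟨f₀ a + b, ?_⟩
  rw [map_add, ← LinearMap.comp_apply, ← H.comm_left, LinearMap.comp_apply, ha₁, sub_add_cancel]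

theorem injective_right (H : IsLadder α β γ f₀ g₀ f₁ g₁) (hα : Function.Surjective α)
    (hβ : Function.Injective β) : Function.Injective γ :=
  LinearMap.injective_of_surjective_of_injective_of_right_exact f₀ g₀ f₁ g₁ α β γ
    H.comm_left H.comm_right H.exact₀ H.exact₁ hα hβ H.surjective₀

theorem surjective_left (H : IsLadder α β γ f₀ g₀ f₁ g₁) (hβ : Function.Surjective β)
    (hγ : Function.Injective γ) : Function.Surjective α :=
  LinearMap.surjective_of_surjective_of_injective_of_left_exact f₀ g₀ f₁ g₁ α β γ
    H.comm_left H.comm_right H.exact₀ H.exact₁ hβ hγ H.injective₁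

theorem exists_ker_lift (H : IsLadder α β γ f₀ g₀ f₁ g₁) (hα : Function.Surjective α)
    {c : C₀} (hc : γ c = 0) : ∃ b, β b = 0 ∧ g₀ b = c := by
  obtain ⟨b, rfl⟩ := H.surjective₀ c
  obtain ⟨a₁, ha₁⟩ := (H.exact₁ (β b)).1 ((LinearMap.congr_fun H.comm_right b).trans hc)
  obtain ⟨a, rfl⟩ := hα a₁
  refine ⟨b - f₀ a, ?_, ?_⟩
  · rw [map_sub, ← ha₁, sub_eq_zero]
    exact LinearMap.congr_fun H.comm_left a
  · rw [map_sub, H.exact₀.apply_apply_eq_zero, sub_zero]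

theorem surjective_left_of_ker_lift (H : IsLadder α β γ f₀ g₀ f₁ g₁)
    (hβ : Function.Surjective β) (hlift : ∀ c, γ c = 0 → ∃ b, β b = 0 ∧ g₀ b = c) :
    Function.Surjective α := by
  intro a₁
  obtain ⟨b, hb⟩ := hβ (f₁ a₁)
  have hγb : γ (g₀ b) = 0 := by
    rw [← LinearMap.comp_apply, ← H.comm_right, LinearMap.comp_apply, hb,
      H.exact₁.apply_apply_eq_zero]
  obtain ⟨b', hb', hgb'⟩ := hlift _ hγb
  obtain ⟨a, ha⟩ := (H.exact₀ (b - b')).1 (by rw [map_sub, hgb', sub_self])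
  refine ⟨a, H.injective₁ ?_⟩
  rw [← LinearMap.comp_apply, H.comm_left, LinearMap.comp_apply, ha, map_sub, hb, hb', sub_zero]

end IsLadder

/-- If `γ` is onto, `f₁` induces a surjection `coker α → coker β`, which is not injective as soon as
some `ξ` outside the range of `α` becomes a value of `β`. -/
theorem IsLadder.finrank_coker_lt {K A₀ A₁ B₀ B₁ C₀ C₁ : Type*} [Field K]
    [AddCommGroup A₀] [AddCommGroup A₁] [AddCommGroup B₀] [AddCommGroup B₁]
    [AddCommGroup C₀] [AddCommGroup C₁] [Module K A₀] [Module K A₁] [Module K B₀] [Module K B₁]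
    [Module K C₀] [Module K C₁] [FiniteDimensional K A₁]
    {α : A₀ →ₗ[K] A₁} {β : B₀ →ₗ[K] B₁} {γ : C₀ →ₗ[K] C₁}
    {f₀ : A₀ →ₗ[K] B₀} {g₀ : B₀ →ₗ[K] C₀} {f₁ : A₁ →ₗ[K] B₁} {g₁ : B₁ →ₗ[K] C₁}
    (H : IsLadder α β γ f₀ g₀ f₁ g₁) (hγ : Function.Surjective γ) {ξ : A₁}
    (hξ : ξ ∉ LinearMap.range α) (hβξ : f₁ ξ ∈ LinearMap.range β) :
    Module.finrank K (B₁ ⧸ LinearMap.range β) < Module.finrank K (A₁ ⧸ LinearMap.range α) := by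
  have hle : LinearMap.range α ≤ (LinearMap.range β).comap f₁ := by
    rintro _ ⟨a, rfl⟩
    exact ⟨f₀ a, (LinearMap.congr_fun H.comm_left a).symm⟩
  let F := (LinearMap.range α).mapQ (LinearMap.range β) f₁ hle
  have hF : Function.Surjective F := by
    intro y
    obtain ⟨b₁, rfl⟩ := Submodule.mkQ_surjective _ y
    obtain ⟨c, hc⟩ := hγ (g₁ b₁)
    obtain ⟨b, rfl⟩ := H.surjective₀ c
    have hb : g₁ (b₁ - β b) = 0 := by
      rw [map_sub, ← hc, sub_eq_zero]
      exact (LinearMap.congr_fun H.comm_right b).symm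
    obtain ⟨a₁, ha₁⟩ := (H.exact₁ _).1 hb
    refine ⟨(LinearMap.range α).mkQ a₁, (Submodule.Quotient.eq _).2 ?_⟩
    exact ⟨-b, by rw [ha₁, map_neg]; abel⟩
  have hker : F ((LinearMap.range α).mkQ ξ) = 0 := (Submodule.Quotient.mk_eq_zero _).2 hβξ
  refine lt_of_le_of_ne (LinearMap.finrank_le_finrank_of_surjective hF) fun heq => hξ ?_
  have : FiniteDimensional K (B₁ ⧸ LinearMap.range β) := Module.Finite.of_surjective F hF
  have hinj : Function.Injective F :=
    (LinearMap.injective_iff_surjective_of_finrank_eq_finrank heq.symm).2 hF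
  exact (Submodule.Quotient.mk_eq_zero _).1 (hinj (hker.trans (map_zero F).symm))

end Ladder

section Families

variable {k ι : Type*} [Field k] {U A B C : ι → Type*}
  [∀ i, AddCommGroup (U i)] [∀ i, AddCommGroup (A i)] [∀ i, AddCommGroup (B i)]
  [∀ i, AddCommGroup (C i)] [∀ i, Module k (U i)] [∀ i, Module k (A i)]
  [∀ i, Module k (B i)] [∀ i, Module k (C i)]

/-- Composition of a family of linear maps `U i → A i` with a fixed family `f i : A i → B i`. -/
def familyPostcomp (U : ι → Type*) [∀ i, AddCommGroup (U i)] [∀ i, Module k (U i)]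
    (f : ∀ i, A i →ₗ[k] B i) : (∀ i, U i →ₗ[k] A i) →ₗ[k] (∀ i, U i →ₗ[k] B i) :=
  LinearMap.piMap fun i => (f i).compRight k

/-- Composition of a fixed family `f i : A i → B i` with a family of linear maps `B i → U i`. -/
def familyPrecomp (U : ι → Type*) [∀ i, AddCommGroup (U i)] [∀ i, Module k (U i)]
    (f : ∀ i, A i →ₗ[k] B i) : (∀ i, B i →ₗ[k] U i) →ₗ[k] (∀ i, A i →ₗ[k] U i) :=
  LinearMap.piMap fun i => (f i).lcomp k (U i)

theorem familyPostcomp_injective {f : ∀ i, A i →ₗ[k] B i} (hf : ∀ i, Function.Injective (f i)) :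
    Function.Injective (familyPostcomp U f) :=
  fun _ _ h => funext fun i =>
    LinearMap.ext fun v => hf i (LinearMap.congr_fun (congrFun h i) v)

theorem familyPostcomp_surjective {g : ∀ i, B i →ₗ[k] C i}
    (hg : ∀ i, Function.Surjective (g i)) : Function.Surjective (familyPostcomp U g) :=
  Function.Surjective.piMap fun i h => Module.projective_lifting_property (g i) h (hg i)

theorem familyPostcomp_exact {f : ∀ i, A i →ₗ[k] B i} {g : ∀ i, B i →ₗ[k] C i}
    (hf : ∀ i, Function.Injective (f i)) (hfg : ∀ i, Function.Exact (f i) (g i)) :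
    Function.Exact (familyPostcomp U f) (familyPostcomp U g) := by
  refine fun h => ⟨fun hgh => ?_, ?_⟩
  · have hmem : ∀ i v, h i v ∈ LinearMap.range (f i) := fun i v =>
      (hfg i _).1 (LinearMap.congr_fun (congrFun hgh i) v)
    let e := fun i => LinearEquiv.ofInjective (f i) (hf i)
    refine ⟨fun i => (e i).symm ∘ₗ (h i).codRestrict _ (hmem i), ?_⟩
    funext i
    ext v
    exact congrArg Subtype.val ((e i).apply_symm_apply ⟨h i v, hmem i v⟩)
  · rintro ⟨e, rfl⟩
    funext i
    ext v
    exact (hfg i).apply_apply_eq_zero _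

theorem familyPrecomp_injective {g : ∀ i, B i →ₗ[k] C i} (hg : ∀ i, Function.Surjective (g i)) :
    Function.Injective (familyPrecomp U g) :=
  Function.Injective.piMap fun i => LinearMap.lcomp_injective_of_surjective (g i) (hg i)

theorem familyPrecomp_surjective {f : ∀ i, A i →ₗ[k] B i}
    (hf : ∀ i, Function.Injective (f i)) : Function.Surjective (familyPrecomp U f) := by
  intro h
  choose r hr using fun i =>
    (f i).exists_leftInverse_of_injective (LinearMap.ker_eq_bot.2 (hf i))
  exact ⟨fun i => h i ∘ₗ r i, funext fun i => LinearMap.ext fun v =>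
    congrArg (h i) (LinearMap.congr_fun (hr i) v)⟩

theorem familyPrecomp_exact {f : ∀ i, A i →ₗ[k] B i} {g : ∀ i, B i →ₗ[k] C i}
    (hg : ∀ i, Function.Surjective (g i)) (hfg : ∀ i, Function.Exact (f i) (g i)) :
    Function.Exact (familyPrecomp U g) (familyPrecomp U f) := by
  refine fun h => ⟨fun hfh => ?_, ?_⟩
  · choose e he using fun i =>
      (LinearMap.exact_lcomp_of_exact_of_surjective (U i) (hfg i) (hg i) (h i)).1 (congrFun hfh i)
    exact ⟨e, funext he⟩
  · rintro ⟨e, rfl⟩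
    exact funext fun i =>
      (LinearMap.exact_lcomp_of_exact_of_surjective (U i) (hfg i) (hg i)).apply_apply_eq_zero _

end Families

/-- A finite-dimensional representation of `Q` on abstract vector spaces. Unlike the matrix-valued
`QRep`, these are stable under subspaces and quotients without a choice of bases. -/
structure LinRep (k : Type u) [Field k] (Q : FinQuiver) where
  V : Fin Q.n → Type v
  [addCommGroup : ∀ i, AddCommGroup (V i)]
  [module : ∀ i, Module k (V i)]
  [finiteDimensional : ∀ i, FiniteDimensional k (V i)]
  map : ∀ x : Fin Q.a, V (Q.src x) →ₗ[k] V (Q.tgt x)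

namespace LinRep

attribute [instance] addCommGroup module finiteDimensional

variable {k : Type u} [Field k] {Q : FinQuiver}

section Cohomology

/-- Families of linear maps indexed by the vertices: the degree-zero term of the complex
computing `Hom(M, N)` and `Ext¹(M, N)`. -/
abbrev VertexFam (M N : LinRep.{u, v} k Q) := ∀ i, M.V i →ₗ[k] N.V i

/-- Families of linear maps indexed by the arrows: the degree-one term of the complex
computing `Hom(M, N)` and `Ext¹(M, N)`. -/
abbrev ArrowFam (M N : LinRep.{u, v} k Q) := ∀ x, M.V (Q.src x) →ₗ[k] N.V (Q.tgt x)

/-- The two-term complex with kernel `Hom(M, N)` and cokernel `Ext¹(M, N)`. -/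
def extMap (M N : LinRep.{u, v} k Q) : VertexFam M N →ₗ[k] ArrowFam M N where
  toFun f := fun x => f (Q.tgt x) ∘ₗ M.map x - N.map x ∘ₗ f (Q.src x)
  map_add' f g := by
    funext x
    simp only [Pi.add_apply, LinearMap.add_comp, LinearMap.comp_add]
    abel
  map_smul' c f := by
    funext x
    simp only [Pi.smul_apply, LinearMap.smul_comp, LinearMap.comp_smul, RingHom.id_apply,
      smul_sub]

/-- `Hom(M, N) = 0`. -/
def HomVanish (M N : LinRep.{u, v} k Q) : Prop := Function.Injective (extMap M N)

/-- `Ext¹(M, N) = 0`. -/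
def ExtVanish (M N : LinRep.{u, v} k Q) : Prop := Function.Surjective (extMap M N)

/-- `N` lies in the right perpendicular category of `M`: `Hom(M, N) = Ext¹(M, N) = 0`. -/
def Perp (M N : LinRep.{u, v} k Q) : Prop := HomVanish M N ∧ ExtVanish M N

/-- Morphisms of representations. -/
@[ext]
structure Hom (M N : LinRep.{u, v} k Q) where
  app : VertexFam M N
  comm : ∀ x v, app (Q.tgt x) (M.map x v) = N.map x (app (Q.src x) v)

namespace Hom

variable {M N A B C : LinRep.{u, v} k Q}

/-- The identity morphism. -/
def id (M : LinRep.{u, v} k Q) : Hom M M := ⟨fun _ => LinearMap.id, fun _ _ => rfl⟩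

/-- Composition of morphisms, in the order of functions. -/
def comp (g : Hom B C) (f : Hom A B) : Hom A C where
  app i := g.app i ∘ₗ f.app i
  comm x v := by simp only [LinearMap.comp_apply, f.comm, g.comm]

instance : Zero (Hom M N) := ⟨⟨0, fun x _ => (map_zero (N.map x)).symm⟩⟩

instance : Sub (Hom M N) := ⟨fun f g => ⟨f.app - g.app, fun x v => by
  simp only [Pi.sub_apply, LinearMap.sub_apply, f.comm, g.comm, map_sub]⟩⟩

theorem exists_inverse (f : Hom M N) (hf : ∀ i, Function.Bijective (f.app i)) :
    ∃ g : Hom N M, (∀ i v, g.app i (f.app i v) = v) ∧ ∀ i v, f.app i (g.app i v) = v := by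
  let e := fun i => LinearEquiv.ofBijective (f.app i) (hf i)
  refine ⟨⟨fun i => (e i).symm, fun x v => ?_⟩, fun i => (e i).symm_apply_apply,
    fun i => (e i).apply_symm_apply⟩
  refine (e _).symm_apply_eq.2 (Eq.trans ?_ (f.comm x _).symm)
  exact congrArg (N.map x) ((e _).apply_symm_apply v).symm

theorem congr_app {f g : Hom M N} (h : f = g) (i : Fin Q.n) (v : M.V i) :
    f.app i v = g.app i v := by rw [h]

theorem extMap_app (f : Hom M N) : extMap M N f.app = 0 :=
  funext fun x => LinearMap.ext fun v => sub_eq_zero.2 (f.comm x v)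

/-- A cocycle of degree zero, as a morphism. -/
def ofExtMap {f : VertexFam M N} (hf : extMap M N f = 0) : Hom M N :=
  ⟨f, fun x v => sub_eq_zero.1 (LinearMap.congr_fun (congrFun hf x) v)⟩

theorem extMap_postcomp (f : Hom A B) (X : LinRep.{u, v} k Q) :
    familyPostcomp (fun x => X.V (Q.src x)) (fun x => f.app (Q.tgt x)) ∘ₗ extMap X A =
      extMap X B ∘ₗ familyPostcomp X.V f.app := by
  refine LinearMap.ext fun h => funext fun x => LinearMap.ext fun v => ?_
  change f.app _ (h _ (X.map x v) - A.map x (h _ v)) =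
    f.app _ (h _ (X.map x v)) - B.map x (f.app _ (h _ v))
  rw [map_sub, f.comm]

theorem extMap_precomp (f : Hom A B) (Y : LinRep.{u, v} k Q) :
    familyPrecomp (fun x => Y.V (Q.tgt x)) (fun x => f.app (Q.src x)) ∘ₗ extMap B Y =
      extMap A Y ∘ₗ familyPrecomp Y.V f.app := by
  refine LinearMap.ext fun h => funext fun x => LinearMap.ext fun v => ?_
  change h _ (B.map x (f.app _ v)) - Y.map x (h _ (f.app _ v)) =
    h _ (f.app _ (A.map x v)) - Y.map x (h _ (f.app _ v))
  rw [f.comm]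

end Hom

variable {A B C X Y : LinRep.{u, v} k Q}

theorem homVanish_iff : HomVanish A B ↔ ∀ f : Hom A B, f = 0 := by
  refine ⟨fun h f => Hom.ext (h (f.extMap_app.trans (map_zero _).symm)), fun h => ?_⟩
  exact (injective_iff_map_eq_zero _).2 fun f hf => congrArg Hom.app (h (Hom.ofExtMap hf))

theorem HomVanish.of_injective_right (f : Hom A B) (hf : ∀ i, Function.Injective (f.app i))
    (h : HomVanish X B) : HomVanish X A := by
  have hinj : Function.Injective (extMap X B ∘ₗ familyPostcomp X.V f.app) :=
    h.comp (familyPostcomp_injective hf)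
  rw [← f.extMap_postcomp, LinearMap.coe_comp] at hinj
  exact hinj.of_comp

theorem ExtVanish.of_surjective_right (g : Hom B C) (hg : ∀ i, Function.Surjective (g.app i))
    (h : ExtVanish X B) : ExtVanish X C := by
  have hsurj : Function.Surjective (extMap X C ∘ₗ familyPostcomp X.V g.app) := by
    rw [← g.extMap_postcomp]
    exact (familyPostcomp_surjective fun x => hg (Q.tgt x)).comp h
  rw [LinearMap.coe_comp] at hsurj
  exact hsurj.of_comp

theorem HomVanish.of_surjective_left (g : Hom B C) (hg : ∀ i, Function.Surjective (g.app i))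
    (h : HomVanish B Y) : HomVanish C Y := by
  have hinj : Function.Injective (extMap B Y ∘ₗ familyPrecomp Y.V g.app) :=
    h.comp (familyPrecomp_injective hg)
  rw [← g.extMap_precomp, LinearMap.coe_comp] at hinj
  exact hinj.of_comp

theorem ExtVanish.of_injective_left (f : Hom A B) (hf : ∀ i, Function.Injective (f.app i))
    (h : ExtVanish B Y) : ExtVanish A Y := by
  have hsurj : Function.Surjective (extMap A Y ∘ₗ familyPrecomp Y.V f.app) := by
    rw [← f.extMap_precomp]
    exact (familyPrecomp_surjective fun x => hf (Q.src x)).comp h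
  rw [LinearMap.coe_comp] at hsurj
  exact hsurj.of_comp

theorem Perp.of_retract {f : Hom A B} {g : Hom B A} (hgf : ∀ i v, g.app i (f.app i v) = v)
    (h : Perp B Y) : Perp A Y :=
  ⟨HomVanish.of_surjective_left g (fun i => Function.LeftInverse.surjective (hgf i)) h.1,
    ExtVanish.of_injective_left f (fun i => Function.LeftInverse.injective (hgf i)) h.2⟩

/-- `0 → A → B → C → 0` is exact. -/
structure ShortExact (f : Hom A B) (g : Hom B C) : Prop where
  injective : ∀ i, Function.Injective (f.app i)
  exact : ∀ i, Function.Exact (f.app i) (g.app i)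
  surjective : ∀ i, Function.Surjective (g.app i)

namespace ShortExact

variable {f : Hom A B} {g : Hom B C}

theorem ladder_from (S : ShortExact f g) (X : LinRep.{u, v} k Q) :
    IsLadder (extMap X A) (extMap X B) (extMap X C)
      (familyPostcomp X.V f.app) (familyPostcomp X.V g.app)
      (familyPostcomp (fun x => X.V (Q.src x)) fun x => f.app (Q.tgt x))
      (familyPostcomp (fun x => X.V (Q.src x)) fun x => g.app (Q.tgt x)) where
  comm_left := f.extMap_postcomp X
  comm_right := g.extMap_postcomp X
  injective₀ := familyPostcomp_injective S.injective
  exact₀ := familyPostcomp_exact S.injective S.exact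
  surjective₀ := familyPostcomp_surjective S.surjective
  injective₁ := familyPostcomp_injective fun _ => S.injective _
  exact₁ := familyPostcomp_exact (fun _ => S.injective _) fun _ => S.exact _
  surjective₁ := familyPostcomp_surjective fun _ => S.surjective _

theorem ladder_into (S : ShortExact f g) (Y : LinRep.{u, v} k Q) :
    IsLadder (extMap C Y) (extMap B Y) (extMap A Y)
      (familyPrecomp Y.V g.app) (familyPrecomp Y.V f.app)
      (familyPrecomp (fun x => Y.V (Q.tgt x)) fun x => g.app (Q.src x))
      (familyPrecomp (fun x => Y.V (Q.tgt x)) fun x => f.app (Q.src x)) where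
  comm_left := g.extMap_precomp Y
  comm_right := f.extMap_precomp Y
  injective₀ := familyPrecomp_injective S.surjective
  exact₀ := familyPrecomp_exact S.surjective S.exact
  surjective₀ := familyPrecomp_surjective S.injective
  injective₁ := familyPrecomp_injective fun _ => S.surjective _
  exact₁ := familyPrecomp_exact (fun _ => S.surjective _) fun _ => S.exact _
  surjective₁ := familyPrecomp_surjective fun _ => S.injective _

theorem exists_extend (S : ShortExact f g) (hC : ExtVanish C Y) (φ : Hom A Y) :
    ∃ ψ : Hom B Y, ψ.comp f = φ := by
  obtain ⟨ψ, hψ, hψφ⟩ := (S.ladder_into Y).exists_ker_lift hC φ.extMap_app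
  exact ⟨Hom.ofExtMap hψ, Hom.ext hψφ⟩

theorem exists_descend (S : ShortExact f g) (φ : Hom B Y) (hφ : φ.comp f = 0) :
    ∃ ψ : Hom C Y, ψ.comp g = φ := by
  obtain ⟨ψ, hψ, hψφ⟩ :=
    (S.ladder_into Y).exists_ker_preimage φ.extMap_app (congrArg Hom.app hφ)
  exact ⟨Hom.ofExtMap hψ, Hom.ext hψφ⟩

theorem extVanish_of_extend (S : ShortExact f g) (hB : ExtVanish B Y)
    (hext : ∀ φ : Hom A Y, ∃ ψ : Hom B Y, ψ.comp f = φ) : ExtVanish C Y := by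
  refine (S.ladder_into Y).surjective_left_of_ker_lift hB fun φ hφ => ?_
  obtain ⟨ψ, hψ⟩ := hext (Hom.ofExtMap hφ)
  exact ⟨ψ.app, ψ.extMap_app, congrArg Hom.app hψ⟩

end ShortExact

end Cohomology

section Constructions

/-- A subrepresentation, given by its spaces at the vertices. -/
structure Subrep (M : LinRep.{u, v} k Q) where
  space : ∀ i, Submodule k (M.V i)
  map_mem : ∀ x, ∀ v ∈ space (Q.src x), M.map x v ∈ space (Q.tgt x)

namespace Subrep

variable {M : LinRep.{u, v} k Q}

/-- A subrepresentation as a representation in its own right. -/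
def rep (S : Subrep M) : LinRep.{u, v} k Q where
  V i := S.space i
  map x := (M.map x).restrict (S.map_mem x)

/-- The quotient of a representation by a subrepresentation. -/
def quotient (S : Subrep M) : LinRep.{u, v} k Q where
  V i := M.V i ⧸ S.space i
  map x := (S.space (Q.src x)).mapQ (S.space (Q.tgt x)) (M.map x) (S.map_mem x)

/-- The inclusion of a subrepresentation. -/
def incl (S : Subrep M) : Hom S.rep M := ⟨fun i => (S.space i).subtype, fun _ _ => rfl⟩

/-- The projection onto the quotient by a subrepresentation. -/
def proj (S : Subrep M) : Hom M S.quotient := ⟨fun i => (S.space i).mkQ, fun _ _ => rfl⟩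

theorem incl_injective (S : Subrep M) (i : Fin Q.n) : Function.Injective (S.incl.app i) :=
  (S.space i).injective_subtype

theorem shortExact (S : Subrep M) : ShortExact S.incl S.proj where
  injective := S.incl_injective
  exact i := LinearMap.exact_subtype_mkQ (S.space i)
  surjective i := (S.space i).mkQ_surjective

end Subrep

namespace Hom

variable {M N A B C : LinRep.{u, v} k Q}

/-- The kernel of a morphism. -/
def ker (f : Hom M N) : Subrep M where
  space i := LinearMap.ker (f.app i)
  map_mem x v hv := by rw [LinearMap.mem_ker] at *; rw [f.comm, hv, map_zero]

/-- The image of a morphism. -/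
def range (f : Hom M N) : Subrep N where
  space i := LinearMap.range (f.app i)
  map_mem x := by rintro _ ⟨v, rfl⟩; exact ⟨M.map x v, f.comm x v⟩

/-- A morphism, corestricted to its image. -/
def rangeRestrict (f : Hom M N) : Hom M f.range.rep :=
  ⟨fun i => (f.app i).rangeRestrict, fun x v => Subtype.ext (f.comm x v)⟩

theorem shortExact_ker (f : Hom M N) : ShortExact f.ker.incl f.rangeRestrict where
  injective := f.ker.incl_injective
  exact i v := by
    refine ⟨fun hv => ⟨⟨v, congrArg Subtype.val hv⟩, rfl⟩, ?_⟩
    rintro ⟨w, rfl⟩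
    exact Subtype.ext w.2
  surjective i := (f.app i).surjective_rangeRestrict

end Hom

/-- The extension `0 → A → E → C → 0` with class `ξ`. -/
def extension (A C : LinRep.{u, v} k Q) (ξ : ArrowFam C A) : LinRep.{u, v} k Q where
  V i := A.V i × C.V i
  map x := ((A.map x).coprod (ξ x)).prod (C.map x ∘ₗ LinearMap.snd k _ _)

variable {A C M : LinRep.{u, v} k Q}

/-- The inclusion of the subobject in an extension. -/
def extensionIncl (ξ : ArrowFam C A) : Hom A (extension A C ξ) where
  app i := LinearMap.inl k (A.V i) (C.V i)
  comm x v := by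
    change (A.map x v, (0 : C.V _)) = (A.map x v + ξ x 0, C.map x 0)
    rw [map_zero, map_zero, add_zero]

/-- The projection of an extension onto the quotient object. -/
def extensionProj (ξ : ArrowFam C A) : Hom (extension A C ξ) C :=
  ⟨fun i => LinearMap.snd k (A.V i) (C.V i), fun _ _ => rfl⟩

theorem extension_shortExact (ξ : ArrowFam C A) :
    ShortExact (extensionIncl ξ) (extensionProj ξ) where
  injective _ := LinearMap.inl_injective
  exact _ := Function.Exact.inl_snd
  surjective _ := LinearMap.snd_surjective

theorem mem_range_extMap_of_section {ξ : ArrowFam C A} (s : Hom C (extension A C ξ))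
    (hs : (extensionProj ξ).comp s = Hom.id C) : ξ ∈ LinearMap.range (extMap C A) := by
  refine ⟨fun i => LinearMap.fst k (A.V i) (C.V i) ∘ₗ s.app i,
    funext fun x => LinearMap.ext fun v => sub_eq_of_eq_add' ?_⟩
  have hcomm : (s.app _ (C.map x v)).1 = A.map x (s.app _ v).1 + ξ x (s.app _ v).2 :=
    congrArg Prod.fst (s.comm x v)
  have hsnd : (s.app _ v).2 = v := Hom.congr_app hs _ v
  rwa [hsnd] at hcomm

/-- The morphism out of a direct sum `A ⊕ C`, encoded as the extension of class `0`, with given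
components. -/
def Hom.coprod (f : Hom A M) (g : Hom C M) : Hom (extension A C 0) M where
  app i := (f.app i).coprod (g.app i)
  comm x v := by
    change f.app _ (A.map x v.1 + 0) + g.app _ (C.map x v.2) =
      M.map x (f.app _ v.1 + g.app _ v.2)
    rw [add_zero, f.comm, g.comm, map_add]

/-- The zero representation. -/
def zeroRep (k : Type u) [Field k] (Q : FinQuiver) : LinRep.{u, v} k Q where
  V _ := PUnit
  map _ := 0

end Constructions

/-- A wide subcategory: a full subcategory closed under kernels, cokernels and extensions. Closure
under isomorphism follows, the zero object being included. -/
structure Wide (P : LinRep.{u, v} k Q → Prop) : Prop where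
  zero : P (zeroRep k Q)
  of_sub_of_mid : ∀ {A B C : LinRep.{u, v} k Q} {f : Hom A B} {g : Hom B C},
    ShortExact f g → P A → P B → P C
  of_sub_of_quot : ∀ {A B C : LinRep.{u, v} k Q} {f : Hom A B} {g : Hom B C},
    ShortExact f g → P A → P C → P B
  of_mid_of_quot : ∀ {A B C : LinRep.{u, v} k Q} {f : Hom A B} {g : Hom B C},
    ShortExact f g → P B → P C → P A
  range : ∀ {A B : LinRep.{u, v} k Q} (f : Hom A B), P A → P B → P f.range.rep

section WideSubcategories

variable {P P' : LinRep.{u, v} k Q → Prop} {A B : LinRep.{u, v} k Q}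

theorem Wide.ker (hP : Wide P) (f : Hom A B) (hA : P A) (hB : P B) : P f.ker.rep :=
  hP.of_mid_of_quot f.shortExact_ker hA (hP.range f hA hB)

theorem Wide.coker (hP : Wide P) (f : Hom A B) (hA : P A) (hB : P B) : P f.range.quotient :=
  hP.of_sub_of_mid f.range.shortExact (hP.range f hA hB) hB

theorem Wide.inter (hP : Wide P) (hP' : Wide P') : Wide fun M => P M ∧ P' M where
  zero := ⟨hP.zero, hP'.zero⟩
  of_sub_of_mid S h h' := ⟨hP.of_sub_of_mid S h.1 h'.1, hP'.of_sub_of_mid S h.2 h'.2⟩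
  of_sub_of_quot S h h' := ⟨hP.of_sub_of_quot S h.1 h'.1, hP'.of_sub_of_quot S h.2 h'.2⟩
  of_mid_of_quot S h h' := ⟨hP.of_mid_of_quot S h.1 h'.1, hP'.of_mid_of_quot S h.2 h'.2⟩
  range f h h' := ⟨hP.range f h.1 h'.1, hP'.range f h.2 h'.2⟩

theorem perp_zeroRep (V : LinRep.{u, v} k Q) : Perp V (zeroRep k Q) :=
  ⟨fun _ _ _ => funext fun _ => LinearMap.ext fun _ => rfl,
    fun _ => ⟨0, funext fun _ => LinearMap.ext fun _ => rfl⟩⟩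

theorem perp_of_subsingleton (V M : LinRep.{u, v} k Q) [∀ i, Subsingleton (V.V i)] : Perp V M :=
  ⟨fun _ _ _ => funext fun _ => Subsingleton.elim _ _,
    fun _ => ⟨0, funext fun _ => Subsingleton.elim _ _⟩⟩

theorem wide_perp (V : LinRep.{u, v} k Q) : Wide (Perp V) where
  zero := perp_zeroRep V
  of_sub_of_mid S hA hB :=
    ⟨(S.ladder_from V).injective_right hA.2 hB.1, hB.2.of_surjective_right _ S.surjective⟩
  of_sub_of_quot S hA hC :=
    ⟨(S.ladder_from V).injective_middle hA.1 hC.1, (S.ladder_from V).surjective_middle hA.2 hC.2⟩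
  of_mid_of_quot S hB hC :=
    ⟨hB.1.of_injective_right _ S.injective, (S.ladder_from V).surjective_left hB.2 hC.1⟩
  range f hA hB :=
    ⟨hB.1.of_injective_right _ f.range.incl_injective,
      hA.2.of_surjective_right _ f.shortExact_ker.surjective⟩

end WideSubcategories

section TotalDimension

variable {M N : LinRep.{u, v} k Q}

/-- The dimension of the direct sum of the spaces at the vertices. -/
noncomputable def totalDim (M : LinRep.{u, v} k Q) : ℕ := ∑ i, Module.finrank k (M.V i)

theorem totalDim_le_of_injective (f : Hom M N) (hf : ∀ i, Function.Injective (f.app i)) :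
    totalDim M ≤ totalDim N :=
  Finset.sum_le_sum fun i _ => LinearMap.finrank_le_finrank_of_injective (hf i)

theorem surjective_of_totalDim_le (f : Hom M N) (hf : ∀ i, Function.Injective (f.app i))
    (h : totalDim N ≤ totalDim M) (i : Fin Q.n) : Function.Surjective (f.app i) := by
  have hle : ∀ i ∈ Finset.univ, Module.finrank k (M.V i) ≤ Module.finrank k (N.V i) :=
    fun i _ => LinearMap.finrank_le_finrank_of_injective (hf i)
  have heq := (Finset.sum_eq_sum_iff_of_le hle).1 ((Finset.sum_le_sum hle).antisymm h) i
    (Finset.mem_univ i)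
  exact (LinearMap.injective_iff_surjective_of_finrank_eq_finrank heq).1 (hf i)

theorem injective_of_totalDim_le (f : Hom M N) (hf : ∀ i, Function.Surjective (f.app i))
    (h : totalDim M ≤ totalDim N) (i : Fin Q.n) : Function.Injective (f.app i) := by
  have hle : ∀ i ∈ Finset.univ, Module.finrank k (N.V i) ≤ Module.finrank k (M.V i) :=
    fun i _ => LinearMap.finrank_le_finrank_of_surjective (hf i)
  have heq := (Finset.sum_eq_sum_iff_of_le hle).1 ((Finset.sum_le_sum hle).antisymm h) i
    (Finset.mem_univ i)
  exact (LinearMap.injective_iff_surjective_of_finrank_eq_finrank heq.symm).2 (hf i)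

end TotalDimension

section Universal

variable {P : LinRep.{u, v} k Q → Prop} {M N B : LinRep.{u, v} k Q}

/-- No proper subobject of `M` lying in `P` contains the vectors `m i`. -/
def Generates (P : LinRep.{u, v} k Q → Prop) (m : ∀ i, M.V i) : Prop :=
  ∀ (N : LinRep.{u, v} k Q) (j : Hom N M), P N → (∀ i, Function.Injective (j.app i)) →
    (∀ i, m i ∈ LinearMap.range (j.app i)) → ∀ i, Function.Surjective (j.app i)

/-- The functor `M ↦ ∏ i, M.V i` on the subcategory `P` is represented by `B`, with universal
element `b`. Equivalently, `B` is the reflection in `P` of the projective generator `kQ`. -/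
structure IsUniversal (P : LinRep.{u, v} k Q → Prop) (B : LinRep.{u, v} k Q) (b : ∀ i, B.V i) :
    Prop where
  mem : P B
  existsUnique : ∀ M, P M → ∀ m : ∀ i, M.V i, ∃! f : Hom B M, ∀ i, f.app i (b i) = m i

theorem exists_generates (M : LinRep.{u, v} k Q) (m : ∀ i, M.V i) (hM : P M) :
    ∃ (N : LinRep.{u, v} k Q) (j : Hom N M) (n : ∀ i, N.V i),
      P N ∧ (∀ i, j.app i (n i) = m i) ∧ Generates P n := by
  induction hd : totalDim M using Nat.strong_induction_on generalizing M with
  | _ d ih =>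
    by_cases hm : Generates P m
    · exact ⟨M, Hom.id M, m, hM, fun _ => rfl, hm⟩
    · simp only [Generates, not_forall] at hm
      obtain ⟨N, j, hN, hj, hmem, i, hi⟩ := hm
      choose n hn using hmem
      have hlt : totalDim N < d :=
        not_le.1 fun hle => hi (surjective_of_totalDim_le j hj (hd.trans_le hle) i)
      obtain ⟨N', j', n', hN', hn', hgen⟩ := ih _ hlt N n hN rfl
      exact ⟨N', j.comp j', n', hN', fun i => (congrArg _ (hn' i)).trans (hn i), hgen⟩

theorem Generates.surjective (hP : Wide P) {m : ∀ i, M.V i} (hm : Generates P m) (hM : P M)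
    (hN : P N) (f : Hom N M) (hf : ∀ i, m i ∈ LinearMap.range (f.app i)) (i : Fin Q.n) :
    Function.Surjective (f.app i) := by
  intro v
  obtain ⟨w, rfl⟩ := hm f.range.rep f.range.incl (hP.range f hN hM) f.range.incl_injective
    (fun i => ⟨⟨m i, hf i⟩, rfl⟩) i v
  exact w.2

theorem Generates.hom_ext (hP : Wide P) {m : ∀ i, M.V i} (hm : Generates P m) (hM : P M)
    (hN : P N) {f g : Hom M N} (hfg : ∀ i, f.app i (m i) = g.app i (m i)) : f = g := by
  refine Hom.ext (funext fun i => LinearMap.ext fun v => ?_)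
  obtain ⟨w, rfl⟩ := hm (f - g).ker.rep (f - g).ker.incl (hP.ker _ hM hN)
    (f - g).ker.incl_injective (fun i => ⟨⟨m i, sub_eq_zero.2 (hfg i)⟩, rfl⟩) i v
  exact sub_eq_zero.1 w.2

/-- Take the subobject `N` of `M ⊕ B` generated by `(m, b)`. The projection `N → B` is onto, hence
bijective by maximality, so `N` is the graph of a morphism. -/
theorem Generates.exists_hom (hP : Wide P) {b : ∀ i, B.V i} (hb : Generates P b) (hB : P B)
    (hmax : ∀ (N : LinRep.{u, v} k Q) (n : ∀ i, N.V i), P N → Generates P n →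
      totalDim N ≤ totalDim B) (hM : P M) (m : ∀ i, M.V i) :
    ∃ f : Hom B M, ∀ i, f.app i (b i) = m i := by
  obtain ⟨N, j, n, hN, hn, hgen⟩ := exists_generates (P := P) (extension M B 0)
    (fun i => (m i, b i)) (hP.of_sub_of_quot (extension_shortExact 0) hM hB)
  let q : Hom N B := (extensionProj 0).comp j
  have hqn : ∀ i, q.app i (n i) = b i := fun i => congrArg Prod.snd (hn i)
  have hsurj := hb.surjective hP hB hN q fun i => ⟨n i, hqn i⟩
  have hinj := injective_of_totalDim_le q hsurj (hmax N n hN hgen)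
  obtain ⟨r, hr, -⟩ := q.exists_inverse fun i => ⟨hinj i, hsurj i⟩
  refine ⟨((Hom.id M).coprod 0).comp (j.comp r), fun i => ?_⟩
  change (j.app i (r.app i (b i))).1 + 0 = m i
  rw [← hqn, hr, hn, add_zero]

theorem exists_isUniversal (hP : Wide P) (T : ℕ)
    (hT : ∀ (M : LinRep.{u, v} k Q) (m : ∀ i, M.V i), P M → Generates P m → totalDim M ≤ T) :
    ∃ B b, IsUniversal P B b := by
  let dims : Set ℕ := {t | ∃ (B : LinRep.{u, v} k Q) (b : ∀ i, B.V i),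
    P B ∧ Generates P b ∧ totalDim B = t}
  have hbdd : BddAbove dims := ⟨T, by rintro _ ⟨B, b, hB, hb, rfl⟩; exact hT B b hB hb⟩
  have hne : dims.Nonempty := by
    obtain ⟨N, -, n, hN, -, hn⟩ := exists_generates (P := P) (zeroRep k Q) (fun _ => 0) hP.zero
    exact ⟨_, N, n, hN, hn, rfl⟩
  obtain ⟨B, b, hB, hb, hdim⟩ := Nat.sSup_mem hne hbdd
  refine ⟨B, b, hB, fun M hM m => ?_⟩
  obtain ⟨f, hf⟩ := hb.exists_hom hP hB
    (fun N n hN hn => (le_csSup hbdd ⟨N, n, hN, hn, rfl⟩).trans_eq hdim.symm) hM m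
  exact ⟨f, hf, fun g hg => hb.hom_ext hP hB hM fun i => (hg i).trans (hf i).symm⟩

namespace IsUniversal

variable {b : ∀ i, B.V i}

theorem exists_hom (hB : IsUniversal P B b) (hM : P M) (m : ∀ i, M.V i) :
    ∃ f : Hom B M, ∀ i, f.app i (b i) = m i :=
  (hB.existsUnique M hM m).exists

theorem hom_ext (hB : IsUniversal P B b) (hM : P M) {f g : Hom B M}
    (hfg : ∀ i, f.app i (b i) = g.app i (b i)) : f = g :=
  (hB.existsUnique M hM fun i => g.app i (b i)).unique hfg fun _ => rfl

theorem extVanish (hB : IsUniversal P B b) (hP : Wide P) (hN : P N) : ExtVanish B N := by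
  intro ξ
  obtain ⟨s, hs⟩ := hB.exists_hom (hP.of_sub_of_quot (extension_shortExact ξ) hN hB.mem)
    fun i => (0, b i)
  refine mem_range_extMap_of_section s (hB.hom_ext hB.mem fun i => ?_)
  exact congrArg Prod.snd (hs i)

end IsUniversal

end Universal

section Gluing

variable {K C E M N X : LinRep.{u, v} k Q}

theorem ShortExact.perp_middle_iff {A B C Y : LinRep.{u, v} k Q} {f : Hom A B} {g : Hom B C}
    (S : ShortExact f g) (hC : Perp C Y) : Perp B Y ↔ Perp A Y :=
  ⟨fun h => ⟨(S.ladder_into Y).injective_right hC.2 h.1, h.2.of_injective_left f S.injective⟩,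
    fun h => ⟨(S.ladder_into Y).injective_middle hC.1 h.1,
      (S.ladder_into Y).surjective_middle hC.2 h.2⟩⟩

/-- `E` is obtained from `K` by finitely many successive extensions with quotient `C`. -/
inductive IterExt (K C : LinRep.{u, v} k Q) : LinRep.{u, v} k Q → Prop
  | base : IterExt K C K
  | step {E : LinRep.{u, v} k Q} : IterExt K C E → ∀ ξ : ArrowFam C E,
      IterExt K C (extension E C ξ)

theorem IterExt.extVanish_right (hE : IterExt K C E) (hK : ExtVanish X K)
    (hC : ExtVanish X C) : ExtVanish X E := by
  induction hE with
  | base => exact hK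
  | step _ ξ ih => exact ((extension_shortExact ξ).ladder_from X).surjective_middle ih hC

theorem IterExt.extVanish_left (hE : IterExt K C E) (hK : ExtVanish K N)
    (hC : ExtVanish C N) : ExtVanish E N := by
  induction hE with
  | base => exact hK
  | step _ ξ ih => exact ((extension_shortExact ξ).ladder_into N).surjective_middle hC ih

theorem IterExt.perp_iff (hE : IterExt K C E) (hC : Perp C M) : Perp E M ↔ Perp K M := by
  induction hE with
  | base => rfl
  | step _ ξ ih => exact ((extension_shortExact ξ).perp_middle_iff hC).trans ih

theorem postcomp_extensionIncl_mem_range (ξ : ArrowFam C E) :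
    familyPostcomp (fun x => C.V (Q.src x)) (fun x => (extensionIncl ξ).app (Q.tgt x)) ξ ∈
      LinearMap.range (extMap C (extension E C ξ)) := by
  refine ⟨fun i => -LinearMap.inr k (E.V i) (C.V i),
    funext fun x => LinearMap.ext fun v => Prod.ext ?_ ?_⟩
  · change -(0 : E.V _) - (E.map x (-0) + ξ x (-v)) = ξ x v
    simp only [neg_zero, map_zero, map_neg, zero_add, zero_sub, neg_neg]
  · change -C.map x v - C.map x (-v) = 0
    rw [map_neg, sub_self]

/-- Bongartz completion. Extending by a nonzero class of `Ext¹(C, E)` kills that class, and creates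
no new ones because `Ext¹(C, C) = 0`. -/
theorem exists_iterExt_extVanish (K : LinRep.{u, v} k Q) (hC : ExtVanish C C) :
    ∃ E, IterExt K C E ∧ ExtVanish C E := by
  suffices h : ∀ (t : ℕ) (E : LinRep.{u, v} k Q), IterExt K C E →
      Module.finrank k (ArrowFam C E ⧸ LinearMap.range (extMap C E)) = t →
      ∃ E, IterExt K C E ∧ ExtVanish C E from h _ K .base rfl
  intro t
  induction t using Nat.strong_induction_on with
  | _ t ih =>
    rintro E hE rfl
    by_cases hCE : ExtVanish C E
    · exact ⟨E, hE, hCE⟩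
    · obtain ⟨ξ, hξ⟩ := not_forall.1 hCE
      exact ih _ (((extension_shortExact ξ).ladder_from C).finrank_coker_lt hC hξ
        (postcomp_extensionIncl_mem_range ξ)) _ (hE.step ξ) rfl

theorem exists_rigid_perp_inter (hK : ExtVanish K K) (hC : ExtVanish C C)
    (hKC : ExtVanish K C) :
    ∃ V : LinRep.{u, v} k Q, ExtVanish V V ∧
      (∀ N, ExtVanish K N → ExtVanish C N → ExtVanish V N) ∧
      ∀ M, Perp V M ↔ Perp K M ∧ Perp C M := by
  obtain ⟨E, hE, hCE⟩ := exists_iterExt_extVanish K hC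
  have S := extension_shortExact (A := E) (C := C) 0
  have hright : ∀ X, ExtVanish X E → ExtVanish X C → ExtVanish X (extension E C 0) :=
    fun X => (S.ladder_from X).surjective_middle
  have hleft : ∀ N, ExtVanish K N → ExtVanish C N → ExtVanish (extension E C 0) N :=
    fun N hKN hCN => (S.ladder_into N).surjective_middle hCN (hE.extVanish_left hKN hCN)
  refine ⟨extension E C 0, hleft _ ?_ ?_, hleft, fun M => ?_⟩
  · exact hright K (hE.extVanish_right hK hKC) hKC
  · exact hright C hCE hC
  have hC_of : Perp (extension E C 0) M → Perp C M := fun h =>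
    ⟨h.1.of_surjective_left _ S.surjective, S.extVanish_of_extend h.2 fun φ =>
      ⟨φ.coprod 0, Hom.ext (funext fun i => LinearMap.coprod_inl _ _)⟩⟩
  have hiff : Perp C M → (Perp (extension E C 0) M ↔ Perp K M) := fun h =>
    (S.perp_middle_iff h).trans (hE.perp_iff h)
  exact ⟨fun h => ⟨(hiff (hC_of h)).1 h, hC_of h⟩, fun h => (hiff h.2).2 h.1⟩

end Gluing

section Reflection

variable {P W : LinRep.{u, v} k Q → Prop} {B B' M : LinRep.{u, v} k Q}

theorem exists_surjective_of_pointwise (hW : Wide W) (hB : W B) {b : ∀ i, B.V i}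
    (hM : ∀ m : ∀ i, M.V i, ∃ f : Hom B M, ∀ i, f.app i (b i) = m i) :
    ∃ (N : LinRep.{u, v} k Q) (f : Hom N M), W N ∧ ∀ i, Function.Surjective (f.app i) := by
  let dims : Set ℕ := {t | ∃ (N : LinRep.{u, v} k Q) (f : Hom N M), W N ∧
    totalDim f.range.rep = t}
  have hbdd : BddAbove dims := ⟨totalDim M, by
    rintro _ ⟨N, f, -, rfl⟩
    exact totalDim_le_of_injective _ f.range.incl_injective⟩
  obtain ⟨N, f, hN, hf⟩ := Nat.sSup_mem (s := dims) ⟨_, B, 0, hB, rfl⟩ hbdd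
  refine ⟨N, f, hN, fun i v => ?_⟩
  classical
  obtain ⟨e, he⟩ := hM (Pi.single i v)
  let g := f.coprod e
  have hle : totalDim g.range.rep ≤ totalDim f.range.rep := (le_csSup hbdd
    ⟨_, g, hW.of_sub_of_quot (extension_shortExact 0) hN hB, rfl⟩).trans_eq hf.symm
  have hsub : ∀ i, f.range.space i ≤ g.range.space i := by
    rintro i _ ⟨w, rfl⟩
    exact ⟨(w, 0), LinearMap.congr_fun (LinearMap.coprod_inl (f.app i) (e.app i)) w⟩
  let ι : Hom f.range.rep g.range.rep :=
    ⟨fun i => Submodule.inclusion (hsub i), fun _ _ => rfl⟩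
  have hι := surjective_of_totalDim_le ι (fun i => Submodule.inclusion_injective (hsub i)) hle i
  have hv : v ∈ g.range.space i := ⟨(0, b i),
    (LinearMap.congr_fun (LinearMap.coprod_inr (f.app i) (e.app i)) (b i)).trans
      ((he i).trans (Pi.single_eq_same i v))⟩
  obtain ⟨⟨_, w, rfl⟩, hw⟩ := hι ⟨v, hv⟩
  exact ⟨w, congrArg Subtype.val hw⟩

/-- An object of `P` has a two-step presentation by objects of `W`, hence is a cokernel in `W`. -/
theorem Wide.le_of_forall_exists_surjective (hP : Wide P) (hW : Wide W)
    (hWP : ∀ M, W M → P M)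
    (hquot : ∀ M, P M → ∃ (N : LinRep.{u, v} k Q) (f : Hom N M), W N ∧
      ∀ i, Function.Surjective (f.app i)) (hM : P M) : W M := by
  obtain ⟨N, f, hN, hf⟩ := hquot M hM
  obtain ⟨N', g, hN', hg⟩ := hquot f.ker.rep (hP.ker f (hWP N hN) hM)
  let φ := f.ker.incl.comp g
  have S : ShortExact φ.range.incl f :=
    { injective := φ.range.incl_injective
      surjective := hf
      exact := fun i v => by
        constructor
        · intro hv
          obtain ⟨w, hw⟩ := hg i ⟨v, hv⟩
          exact ⟨⟨v, w, congrArg Subtype.val hw⟩, rfl⟩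
        · rintro ⟨⟨_, w, rfl⟩, rfl⟩
          exact (g.app i w).2 }
  exact hW.of_sub_of_mid S (hW.range φ hN' hN) hN

namespace IsUniversal

variable {b : ∀ i, B.V i} {b' : ∀ i, B'.V i} {φ : Hom B B'}

theorem exists_comp_eq (hB : IsUniversal P B b) (hB' : IsUniversal W B' b')
    (hφ : ∀ i, φ.app i (b i) = b' i) (hMP : P M) (hMW : W M) (f : Hom B M) :
    ∃ e : Hom B' M, e.comp φ = f := by
  obtain ⟨e, he⟩ := hB'.exists_hom hMW fun i => f.app i (b i)
  exact ⟨e, hB.hom_ext hMP fun i => (congrArg _ (hφ i)).trans (he i)⟩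

theorem perp_ker (hP : Wide P) (hW : Wide W) (hB : IsUniversal P B b)
    (hB' : IsUniversal W B' b') (hφ : ∀ i, φ.app i (b i) = b' i) (hMP : P M) (hMW : W M) :
    Perp φ.ker.rep M := by
  refine ⟨homVanish_iff.2 fun f => ?_,
    (hB.extVanish hP hMP).of_injective_left _ φ.ker.incl_injective⟩
  have hrange : ExtVanish φ.range.rep M :=
    (hB'.extVanish hW hMW).of_injective_left _ φ.range.incl_injective
  obtain ⟨g, rfl⟩ := φ.shortExact_ker.exists_extend hrange f
  obtain ⟨e, rfl⟩ := hB.exists_comp_eq hB' hφ hMP hMW g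
  refine Hom.ext (funext fun i => LinearMap.ext fun v => ?_)
  exact (congrArg (e.app i) v.2).trans (map_zero _)

theorem perp_coker (hW : Wide W) (hB : IsUniversal P B b) (hB' : IsUniversal W B' b')
    (hφ : ∀ i, φ.app i (b i) = b' i) (hMP : P M) (hMW : W M) : Perp φ.range.quotient M := by
  have hcomp : φ.range.proj.comp φ = 0 := Hom.ext <| funext fun i => LinearMap.ext fun v =>
    (Submodule.Quotient.mk_eq_zero _).2 ⟨v, rfl⟩
  constructor
  · refine homVanish_iff.2 fun f => ?_
    have hf : f.comp φ.range.proj = 0 := hB'.hom_ext hMW fun i => by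
      rw [← hφ]
      exact (congrArg (f.app i) (Hom.congr_app hcomp i (b i))).trans (map_zero _)
    refine Hom.ext (funext fun i => LinearMap.ext fun v => ?_)
    obtain ⟨v, rfl⟩ := φ.range.shortExact.surjective i v
    exact Hom.congr_app hf i v
  · refine φ.range.shortExact.extVanish_of_extend (hB'.extVanish hW hMW) fun f => ?_
    obtain ⟨e, he⟩ := hB.exists_comp_eq hB' hφ hMP hMW (f.comp φ.rangeRestrict)
    refine ⟨e, Hom.ext (funext fun i => LinearMap.ext ?_)⟩
    rintro ⟨_, v, rfl⟩
    exact Hom.congr_app he i v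

theorem exists_hom_of_perp (hB : IsUniversal P B b) (hφ : ∀ i, φ.app i (b i) = b' i)
    (hM : P M) (hker : Perp φ.ker.rep M) (hcoker : Perp φ.range.quotient M)
    (m : ∀ i, M.V i) : ∃ e : Hom B' M, ∀ i, e.app i (b' i) = m i := by
  obtain ⟨f, hf⟩ := hB.exists_hom hM m
  obtain ⟨g, rfl⟩ := φ.shortExact_ker.exists_descend f (homVanish_iff.1 hker.1 _)
  obtain ⟨e, rfl⟩ := φ.range.shortExact.exists_extend hcoker.2 g
  exact ⟨e, fun i => by rw [← hφ, ← hf]; rfl⟩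

/-- `K` and `C` are the kernel and the cokernel of the comparison morphism between the universal
objects of `P` and `W`. -/
theorem exists_perp_iff (hP : Wide P) (hW : Wide W) (hWP : ∀ M, W M → P M)
    (hB : IsUniversal P B b) (hB' : IsUniversal W B' b') :
    ∃ K C : LinRep.{u, v} k Q, P K ∧ P C ∧ (∀ N, P N → ExtVanish K N) ∧ ExtVanish C C ∧
      ∀ M, W M ↔ P M ∧ Perp K M ∧ Perp C M := by
  obtain ⟨φ, hφ⟩ := hB.exists_hom (hWP _ hB'.mem) b'
  let S : LinRep.{u, v} k Q → Prop := fun M =>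
    P M ∧ Perp φ.ker.rep M ∧ Perp φ.range.quotient M
  have hS : Wide S := hP.inter ((wide_perp _).inter (wide_perp _))
  have hcoker : ∀ M, W M → Perp φ.range.quotient M := fun M hM =>
    perp_coker hW hB hB' hφ (hWP M hM) hM
  have hWS : ∀ M, W M → S M := fun M hM =>
    ⟨hWP M hM, perp_ker hP hW hB hB' hφ (hWP M hM) hM, hcoker M hM⟩
  refine ⟨φ.ker.rep, φ.range.quotient, hP.ker φ hB.mem (hWP _ hB'.mem),
    hP.coker φ hB.mem (hWP _ hB'.mem),
    fun N hN => (hB.extVanish hP hN).of_injective_left _ φ.ker.incl_injective,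
    (hcoker B' hB'.mem).2.of_surjective_right _ φ.range.shortExact.surjective,
    fun M => ⟨hWS M, fun hM => hS.le_of_forall_exists_surjective hW hWS ?_ hM⟩⟩
  exact fun M hM => exists_surjective_of_pointwise hW hB'.mem
    (hB.exists_hom_of_perp hφ hM.1 hM.2.1 hM.2.2)

end IsUniversal

theorem exists_rigid_perp_iff_wide {V : LinRep.{u, v} k Q} (hV : ExtVanish V V) (hW : Wide W)
    (hWV : ∀ M, W M → Perp V M) {b : ∀ i, B.V i} {b' : ∀ i, B'.V i}
    (hB : IsUniversal (Perp V) B b) (hB' : IsUniversal W B' b') :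
    ∃ V' : LinRep.{u, v} k Q, ExtVanish V' V' ∧ ∀ M, Perp V' M ↔ W M := by
  obtain ⟨K, C, hK, hC, hext, hCC, hiff⟩ := hB.exists_perp_iff (wide_perp V) hW hWV hB'
  obtain ⟨V', hV', hV'N, hV'iff⟩ := exists_rigid_perp_inter hV (hext K hK) hK.2
  obtain ⟨V'', hV'', -, hV''iff⟩ :=
    exists_rigid_perp_inter hV' hCC (hV'N C hC.2 (hext C hC))
  exact ⟨V'', hV'', fun M => by rw [hV''iff, hV'iff, hiff, and_assoc]⟩

end Reflection

section EulerForm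

variable {M N : LinRep.{u, v} k Q}

/-- The dimension vector. -/
noncomputable def dimVec (M : LinRep.{u, v} k Q) : Fin Q.n → ℤ := fun i => Module.finrank k (M.V i)

theorem euler_eq_finrank_sub (M N : LinRep.{u, v} k Q) : Q.euler M.dimVec N.dimVec =
    (Module.finrank k (VertexFam M N) : ℤ) - Module.finrank k (ArrowFam M N) := by
  simp only [Module.finrank_pi_fintype, Module.finrank_linearMap, FinQuiver.euler, dimVec,
    Nat.cast_sum, Nat.cast_mul]

theorem euler_eq_finrank_ker_sub (M N : LinRep.{u, v} k Q) : Q.euler M.dimVec N.dimVec =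
    (Module.finrank k (LinearMap.ker (extMap M N)) : ℤ) -
      Module.finrank k (ArrowFam M N ⧸ LinearMap.range (extMap M N)) := by
  have hker := LinearMap.finrank_range_add_finrank_ker (extMap M N)
  have hcoker := Submodule.finrank_quotient_add_finrank (LinearMap.range (extMap M N))
  rw [euler_eq_finrank_sub]
  omega

theorem finrank_ker_extMap_eq_zero_iff :
    Module.finrank k (LinearMap.ker (extMap M N)) = 0 ↔ HomVanish M N := by
  rw [Submodule.finrank_eq_zero, LinearMap.ker_eq_bot, HomVanish]

theorem finrank_coker_extMap_eq_zero_iff :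
    Module.finrank k (ArrowFam M N ⧸ LinearMap.range (extMap M N)) = 0 ↔ ExtVanish M N := by
  rw [Module.finrank_zero_iff, Submodule.Quotient.subsingleton_iff, LinearMap.range_eq_top,
    ExtVanish]

theorem HomVanish.euler_nonpos (h : HomVanish M N) : Q.euler M.dimVec N.dimVec ≤ 0 := by
  rw [euler_eq_finrank_ker_sub, finrank_ker_extMap_eq_zero_iff.2 h]
  omega

theorem Perp.euler_eq_zero (h : Perp M N) : Q.euler M.dimVec N.dimVec = 0 := by
  rw [euler_eq_finrank_ker_sub, finrank_ker_extMap_eq_zero_iff.2 h.1,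
    finrank_coker_extMap_eq_zero_iff.2 h.2, sub_self]

theorem ExtVanish.homVanish_of_euler_nonpos (h : ExtVanish M N)
    (h₀ : Q.euler M.dimVec N.dimVec ≤ 0) : HomVanish M N := by
  rw [euler_eq_finrank_ker_sub, finrank_coker_extMap_eq_zero_iff.2 h] at h₀
  exact finrank_ker_extMap_eq_zero_iff.1 (by omega)

theorem HomVanish.extVanish_of_euler_eq_zero (h : HomVanish M N)
    (h₀ : Q.euler M.dimVec N.dimVec = 0) : ExtVanish M N := by
  rw [euler_eq_finrank_ker_sub, finrank_ker_extMap_eq_zero_iff.2 h] at h₀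
  exact finrank_coker_extMap_eq_zero_iff.1 (by omega)

/-- A nonzero morphism out of `M` would have an image `I` with `Ext¹(M, I) = 0`, a quotient of
`Ext¹(M, M)`, and `Hom(M, I) ≠ 0`. -/
theorem ExtVanish.homVanish_of_forall_subrep (hM : ExtVanish M M)
    (h : ∀ S : Subrep N, Q.euler M.dimVec S.rep.dimVec ≤ 0) : HomVanish M N := by
  refine homVanish_iff.2 fun f => ?_
  have hext := hM.of_surjective_right f.rangeRestrict f.shortExact_ker.surjective
  have hzero := homVanish_iff.1 (hext.homVanish_of_euler_nonpos (h f.range)) f.rangeRestrict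
  exact Hom.ext (funext fun i => LinearMap.ext fun v =>
    congrArg Subtype.val (Hom.congr_app hzero i v))

theorem sum_dimVec (M : LinRep.{u, v} k Q) : ∑ i, M.dimVec i = totalDim M :=
  (Nat.cast_sum _ _).symm

/-- An endomorphism is determined by the images of the generators. -/
theorem Generates.euler_self_le {P : LinRep.{u, v} k Q → Prop} {m : ∀ i, M.V i}
    (hm : Generates P m) (hP : Wide P) (hM : P M) :
    Q.euler M.dimVec M.dimVec ≤ ∑ i, M.dimVec i := by
  let ev : VertexFam M M →ₗ[k] ∀ i, M.V i := LinearMap.piMap fun i => LinearMap.applyₗ (m i)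
  have hinj : Function.Injective (ev ∘ₗ (LinearMap.ker (extMap M M)).subtype) :=
    fun f g hfg => Subtype.ext (congrArg Hom.app (hm.hom_ext hP hM hM
      (f := Hom.ofExtMap f.2) (g := Hom.ofExtMap g.2) fun i => congrFun hfg i))
  have hle := LinearMap.finrank_le_finrank_of_injective hinj
  rw [Module.finrank_pi_fintype] at hle
  rw [euler_eq_finrank_ker_sub, sum_dimVec, totalDim]
  omega

theorem exists_isUniversal_of_posDef {P : LinRep.{u, v} k Q → Prop} (hP : Wide P)
    {y : Fin Q.n → ℤ} (hy : ∀ M, P M → Q.euler y M.dimVec = 0)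
    (hpos : ∀ v ≠ 0, Q.euler y v = 0 → 0 < Q.euler v v) : ∃ B b, IsUniversal P B b := by
  obtain ⟨T, hT⟩ := FinQuiver.exists_sum_le_of_posDef hpos
  refine exists_isUniversal hP T fun M m hM hm => ?_
  rw [← Nat.cast_le (α := ℤ), ← sum_dimVec]
  exact hT M.dimVec (hy M hM) (hm.euler_self_le hP hM)

theorem exists_rigid_perp_inter_of_posDef {V₁ : LinRep.{u, v} k Q} (V₂ : LinRep.{u, v} k Q)
    (hV₁ : ExtVanish V₁ V₁) {y : Fin Q.n → ℤ}
    (hy : ∀ M, Perp V₁ M → Q.euler y M.dimVec = 0)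
    (hpos : ∀ v ≠ 0, Q.euler y v = 0 → 0 < Q.euler v v) :
    ∃ V : LinRep.{u, v} k Q, ExtVanish V V ∧ ∀ M, Perp V M ↔ Perp V₁ M ∧ Perp V₂ M := by
  have hW := (wide_perp V₁).inter (wide_perp V₂)
  obtain ⟨B, b, hB⟩ := exists_isUniversal_of_posDef (wide_perp V₁) hy hpos
  obtain ⟨B', b', hB'⟩ := exists_isUniversal_of_posDef hW (fun M hM => hy M hM.1) hpos
  exact exists_rigid_perp_iff_wide hV₁ hW (fun M hM => hM.1) hB hB'

end EulerForm

end LinRep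

section Rank

variable {K m n : Type*} [Field K] [Fintype n]

theorem matrix_eq_zero_of_rank_eq_zero {A : Matrix m n K} (hA : A.rank = 0) : A = 0 := by
  have hzero : A.mulVecLin = 0 := LinearMap.range_eq_bot.1 (Submodule.finrank_eq_zero.1 hA)
  exact Matrix.mulVec_injective (funext fun v =>
    (LinearMap.congr_fun hzero v).trans (Matrix.zero_mulVec v).symm)

theorem matrix_eq_one_of_mul_self_of_rank [DecidableEq n] {A : Matrix n n K} (hA : A * A = A)
    (hrank : A.rank = Fintype.card n) : A = 1 := by
  have hle := Matrix.rank_add_rank_le_card_of_mul_eq_zero (A := A) (B := A - 1)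
    (by rw [mul_sub, hA, mul_one, sub_self])
  exact sub_eq_zero.1 (matrix_eq_zero_of_rank_eq_zero (by omega))

end Rank

namespace QRep

variable {k : Type} [Field k] {Q : FinQuiver} {L M N : QRep k Q}

/-- A matrix representation, acting on column vectors. -/
abbrev toLin (M : QRep k Q) : LinRep.{0, 0} k Q where
  V i := Fin (M.d i) → k
  map x := (M.mat x).mulVecLin

theorem dimVec_toLin (M : QRep k Q) : M.toLin.dimVec = M.dimVec :=
  funext fun _ => congrArg Nat.cast (Module.finrank_fin_fun k)

/-- Families of matrices at the vertices, as families of linear maps. -/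
def vertexEquiv (M N : QRep k Q) :
    (∀ i, Matrix (Fin (N.d i)) (Fin (M.d i)) k) ≃ₗ[k] LinRep.VertexFam M.toLin N.toLin :=
  LinearEquiv.piCongrRight fun _ => Matrix.toLin'

/-- Families of matrices at the arrows, as families of linear maps. -/
def arrowEquiv (M N : QRep k Q) :
    (∀ x, Matrix (Fin (N.d (Q.tgt x))) (Fin (M.d (Q.src x))) k) ≃ₗ[k]
      LinRep.ArrowFam M.toLin N.toLin :=
  LinearEquiv.piCongrRight fun _ => Matrix.toLin'

theorem extMap_vertexEquiv (f : ∀ i, Matrix (Fin (N.d i)) (Fin (M.d i)) k) :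
    LinRep.extMap M.toLin N.toLin (vertexEquiv M N f) = arrowEquiv M N (extMap M N f) := by
  refine funext fun x => LinearMap.ext fun v => ?_
  change f _ *ᵥ (M.mat x *ᵥ v) - N.mat x *ᵥ (f _ *ᵥ v) =
    (f (Q.tgt x) * M.mat x - N.mat x * f (Q.src x)) *ᵥ v
  rw [Matrix.sub_mulVec, Matrix.mulVec_mulVec, Matrix.mulVec_mulVec]

theorem extDim_eq_zero_iff : extDim M N = 0 ↔ LinRep.ExtVanish M.toLin N.toLin := by
  have hcomm : LinRep.extMap M.toLin N.toLin ∘ vertexEquiv M N = arrowEquiv M N ∘ extMap M N :=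
    funext extMap_vertexEquiv
  rw [extDim, Module.finrank_zero_iff, Submodule.Quotient.subsingleton_iff,
    LinearMap.range_eq_top, LinRep.ExtVanish, ← (vertexEquiv M N).surjective.of_comp_iff, hcomm]
  exact (EquivLike.comp_surjective _ (arrowEquiv M N)).symm

theorem mem_homSpace_iff {f : ∀ i, Matrix (Fin (N.d i)) (Fin (M.d i)) k} :
    f ∈ homSpace M N ↔ LinRep.extMap M.toLin N.toLin (vertexEquiv M N f) = 0 := by
  rw [extMap_vertexEquiv, LinearEquiv.map_eq_zero_iff, funext_iff]
  exact forall_congr' fun x => sub_eq_zero.symm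

/-- A morphism of matrix representations, as a morphism of representations. -/
def toHom {f : ∀ i, Matrix (Fin (N.d i)) (Fin (M.d i)) k} (hf : f ∈ homSpace M N) :
    LinRep.Hom M.toLin N.toLin :=
  .ofExtMap (mem_homSpace_iff.1 hf)

theorem exists_toHom_eq (φ : LinRep.Hom M.toLin N.toLin) :
    ∃ (f : _) (hf : f ∈ homSpace M N), toHom hf = φ := by
  obtain ⟨f, hf⟩ := (vertexEquiv M N).surjective φ.app
  exact ⟨f, mem_homSpace_iff.2 (hf ▸ φ.extMap_app), LinRep.Hom.ext hf⟩

theorem isSubrep_iff :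
    IsSubrep L M ↔ ∃ φ : LinRep.Hom L.toLin M.toLin, ∀ i, Function.Injective (φ.app i) := by
  refine ⟨fun ⟨f, hf, hinj⟩ => ⟨toHom hf, hinj⟩, fun ⟨φ, hφ⟩ => ?_⟩
  obtain ⟨f, hf, rfl⟩ := exists_toHom_eq φ
  exact ⟨f, hf, hφ⟩

theorem isSummand_iff : IsSummand L M ↔
    ∃ (φ : LinRep.Hom L.toLin M.toLin) (ψ : LinRep.Hom M.toLin L.toLin),
      ∀ i v, ψ.app i (φ.app i v) = v := by
  have key : ∀ {i} {f : Matrix (Fin (M.d i)) (Fin (L.d i)) k}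
      {g : Matrix (Fin (L.d i)) (Fin (M.d i)) k}, g * f = 1 ↔ ∀ v, g *ᵥ (f *ᵥ v) = v := by
    intro i f g
    simp only [Matrix.mulVec_mulVec]
    exact ⟨fun h v => by rw [h, Matrix.one_mulVec], fun h => Matrix.mulVec_injective
      (funext fun v => (h v).trans (Matrix.one_mulVec v).symm)⟩
  constructor
  · rintro ⟨f, hf, g, hg, hgf⟩
    exact ⟨toHom hf, toHom hg, fun i => key.1 (hgf i)⟩
  · rintro ⟨φ, ψ, h⟩
    obtain ⟨f, hf, rfl⟩ := exists_toHom_eq φ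
    obtain ⟨g, hg, rfl⟩ := exists_toHom_eq ψ
    exact ⟨f, hf, g, hg, fun i => key.2 (h i)⟩

/-- The matrices of a representation with respect to chosen bases. -/
noncomputable abbrev ofLin (X : LinRep.{0, 0} k Q) : QRep k Q where
  d i := Module.finrank k (X.V i)
  mat x := LinearMap.toMatrix (Module.finBasis k _) (Module.finBasis k _) (X.map x)

/-- The isomorphism of `X` with its matrix form, given by the coordinates. -/
noncomputable def coordHom (X : LinRep.{0, 0} k Q) : LinRep.Hom X (ofLin X).toLin where
  app i := (Module.finBasis k (X.V i)).equivFun.toLinearMap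
  comm x v := (LinearMap.toMatrix_mulVec_repr (Module.finBasis k (X.V (Q.src x)))
    (Module.finBasis k (X.V (Q.tgt x))) (X.map x) v).symm

theorem dimVec_ofLin (X : LinRep.{0, 0} k Q) : (ofLin X).dimVec = X.dimVec := rfl

theorem coordHom_bijective (X : LinRep.{0, 0} k Q) (i : Fin Q.n) :
    Function.Bijective ((coordHom X).app i) :=
  (Module.finBasis k (X.V i)).equivFun.bijective

theorem exists_coordHom_inverse (X : LinRep.{0, 0} k Q) :
    ∃ ψ : LinRep.Hom (ofLin X).toLin X, (∀ i v, ψ.app i ((coordHom X).app i v) = v) ∧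
      ∀ i v, (coordHom X).app i (ψ.app i v) = v :=
  (coordHom X).exists_inverse (coordHom_bijective X)

theorem perp_ofLin_iff {X Y : LinRep.{0, 0} k Q} :
    LinRep.Perp (ofLin X).toLin Y ↔ LinRep.Perp X Y := by
  obtain ⟨ψ, hψ, hψ'⟩ := exists_coordHom_inverse X
  exact ⟨.of_retract hψ, .of_retract hψ'⟩

theorem extVanish_ofLin {X : LinRep.{0, 0} k Q} (hX : LinRep.ExtVanish X X) :
    LinRep.ExtVanish (ofLin X).toLin (ofLin X).toLin := by
  obtain ⟨ψ, -, hψ⟩ := exists_coordHom_inverse X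
  exact (hX.of_surjective_right (coordHom X) fun i => (coordHom_bijective X i).2).of_injective_left
    ψ fun i => Function.LeftInverse.injective (hψ i)

theorem isSubrep_ofLin (S : LinRep.Subrep M.toLin) : IsSubrep (ofLin S.rep) M := by
  obtain ⟨ψ, -, hψ⟩ := exists_coordHom_inverse S.rep
  exact isSubrep_iff.2 ⟨S.incl.comp ψ, fun i =>
    (S.incl_injective i).comp (Function.LeftInverse.injective (hψ i))⟩

theorem semiStable_dimVec_iff {V : QRep k Q} (hV : LinRep.ExtVanish V.toLin V.toLin) :
    SemiStable V.dimVec M ↔ LinRep.Perp V.toLin M.toLin := by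
  rw [SemiStable, ← dimVec_toLin V, ← dimVec_toLin M]
  refine ⟨fun ⟨hzero, hsub⟩ => ?_, fun h => ⟨h.euler_eq_zero, fun L hL => ?_⟩⟩
  · have hhom : LinRep.HomVanish V.toLin M.toLin := hV.homVanish_of_forall_subrep fun S => by
      rw [← dimVec_ofLin S.rep]
      exact hsub _ (isSubrep_ofLin S)
    exact ⟨hhom, hhom.extVanish_of_euler_eq_zero hzero⟩
  · obtain ⟨φ, hφ⟩ := isSubrep_iff.1 hL
    rw [← dimVec_toLin L]
    exact (h.1.of_injective_right φ hφ).euler_nonpos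

theorem IsSummand.refl (M : QRep k Q) : IsSummand M M :=
  isSummand_iff.2 ⟨.id _, .id _, fun _ _ => rfl⟩

theorem IsSummand.trans (h : IsSummand L M) (h' : IsSummand M N) : IsSummand L N := by
  obtain ⟨φ, ψ, hφ⟩ := isSummand_iff.1 h
  obtain ⟨φ', ψ', hφ'⟩ := isSummand_iff.1 h'
  exact isSummand_iff.2 ⟨φ'.comp φ, ψ.comp ψ', fun i v =>
    (congrArg (ψ.app i) (hφ' i _)).trans (hφ i v)⟩

theorem exists_isSummand_rank {f : ∀ i, Matrix (Fin (M.d i)) (Fin (M.d i)) k}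
    (hf : f ∈ homSpace M M) (hidem : ∀ i, f i * f i = f i) :
    ∃ L, IsSummand L M ∧ ∀ i, L.d i = (f i).rank := by
  let I := (toHom hf).range
  obtain ⟨ψ, -, hψ⟩ := exists_coordHom_inverse I.rep
  refine ⟨ofLin I.rep, isSummand_iff.2 ⟨I.incl.comp ψ, (coordHom I.rep).comp
    (toHom hf).rangeRestrict, fun i v => ?_⟩, fun _ => rfl⟩
  have hfix : ∀ w : I.space i, (toHom hf).rangeRestrict.app i w.1 = w := by
    rintro ⟨_, w, rfl⟩
    refine Subtype.ext ?_
    change f i *ᵥ (f i *ᵥ w) = f i *ᵥ w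
    rw [Matrix.mulVec_mulVec, hidem]
  exact (congrArg _ (hfix (ψ.app i v))).trans (hψ i v)

/-- A nonzero summand of least dimension is indecomposable. -/
theorem exists_indec_summand (hM : ∃ i, M.d i ≠ 0) : ∃ L, IsSummand L M ∧ Indec L := by
  obtain ⟨L, ⟨hLM, hL⟩, hmin⟩ := exists_minimalFor_of_wellFoundedLT
    (fun L : QRep k Q => IsSummand L M ∧ ∃ i, L.d i ≠ 0) (fun L => ∑ i, L.d i)
    ⟨M, .refl M, hM⟩
  refine ⟨L, hLM, hL, fun f hf hidem => or_iff_not_imp_left.2 fun hf₀ => ?_⟩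
  obtain ⟨L', hL', hrank⟩ := exists_isSummand_rank hf hidem
  have hne : ∃ i, L'.d i ≠ 0 := by
    by_contra! h
    exact hf₀ (funext fun i => matrix_eq_zero_of_rank_eq_zero ((hrank i).symm.trans (h i)))
  have hle : ∀ i ∈ Finset.univ, L'.d i ≤ L.d i := fun i _ =>
    (hrank i).trans_le (Matrix.rank_le_width _)
  have hsum := hmin ⟨hL'.trans hLM, hne⟩ (Finset.sum_le_sum hle)
  have heq := (Finset.sum_eq_sum_iff_of_le hle).1 ((Finset.sum_le_sum hle).antisymm hsum)
  exact funext fun i => matrix_eq_one_of_mul_self_of_rank (hidem i)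
    ((hrank i).symm.trans ((heq i (Finset.mem_univ i)).trans (Fintype.card_fin _).symm))

theorem IsSummand.perp {Y : LinRep.{0, 0} k Q} (h : IsSummand L N) (hY : LinRep.Perp N.toLin Y) :
    LinRep.Perp L.toLin Y := by
  obtain ⟨_, _, hψφ⟩ := isSummand_iff.1 h
  exact hY.of_retract hψφ

end QRep

open QRep in
/-- For a Euclidean quiver, every `L` pairing nontrivially with the null root has the required
positivity property. -/
theorem inter_semistable_strongly_prehom_general (k : Type) [Field k] (Q : FinQuiver)
    (V₁ V₂ : QRep k Q) (h₁ : extDim V₁ V₁ = 0) (h₂ : extDim V₂ V₂ = 0)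
    (hpos : (∃ i, V₁.d i ≠ 0) → ∃ L, IsSummand L V₁ ∧
      ∀ v ≠ 0, Q.euler L.dimVec v = 0 → 0 < Q.euler v v) :
    ∃ V₃ : QRep k Q, extDim V₃ V₃ = 0 ∧
      ∀ M : QRep k Q,
        (SemiStable V₁.dimVec M ∧ SemiStable V₂.dimVec M) ↔ SemiStable V₃.dimVec M := by
  have hV₁ := extDim_eq_zero_iff.1 h₁
  have hV₂ := extDim_eq_zero_iff.1 h₂
  by_cases hne : ∃ i, V₁.d i ≠ 0
  · obtain ⟨L, hL, hLpos⟩ := hpos hne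
    obtain ⟨X, hX, hperp⟩ := LinRep.exists_rigid_perp_inter_of_posDef V₂.toLin hV₁
      (y := L.dimVec) (fun M hM => dimVec_toLin L ▸ (hL.perp hM).euler_eq_zero) hLpos
    have hX' := extVanish_ofLin hX
    refine ⟨ofLin X, extDim_eq_zero_iff.2 hX', fun M => ?_⟩
    rw [semiStable_dimVec_iff hV₁, semiStable_dimVec_iff hV₂, semiStable_dimVec_iff hX',
      perp_ofLin_iff, hperp]
  · push Not at hne
    have : ∀ i, Subsingleton (V₁.toLin.V i) := fun i => by
      change Subsingleton (Fin (V₁.d i) → k)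
      rw [hne i]
      infer_instance
    exact ⟨V₂, h₂, fun M => and_iff_right
      ((semiStable_dimVec_iff hV₁).2 (LinRep.perp_of_subsingleton _ _))⟩

open QRep in
/-- for strongly prehomogeneous dimension vectors `d₁ = dim V₁`,
`d₂ = dim V₂` (rigid with all indecomposable summands non-regular), the
intersection of the semi-stable subcategories is again semi-stable, for a
prehomogeneous dimension vector `d₃ = dim V₃` with `V₃` rigid. -/
theorem inter_semistable_strongly_prehom (k : Type) [Field k] [IsAlgClosed k]
    (Q : FinQuiver) (hQ : Q.IsEuclidean) (δ : Fin Q.n → ℤ) (hδ : Q.IsNullRoot δ)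
    (V₁ V₂ : QRep k Q) (h₁ : extDim V₁ V₁ = 0) (h₂ : extDim V₂ V₂ = 0)
    (hs₁ : ∀ L, IsSummand L V₁ → Indec L → Q.euler δ L.dimVec ≠ 0)
    (hs₂ : ∀ L, IsSummand L V₂ → Indec L → Q.euler δ L.dimVec ≠ 0) :
    ∃ V₃ : QRep k Q, extDim V₃ V₃ = 0 ∧
      ∀ M : QRep k Q,
        (SemiStable V₁.dimVec M ∧ SemiStable V₂.dimVec M) ↔
          SemiStable V₃.dimVec M :=
  inter_semistable_strongly_prehom_general k Q V₁ V₂ h₁ h₂ fun hV₁ =>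
    have ⟨L, hL, hLi⟩ := exists_indec_summand hV₁
    ⟨L, hL, fun _ hv hLv => hδ.euler_self_pos hQ.2.2.1 (hs₁ L hL hLi) hv hLv⟩
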